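/- arXiv:2507.23075 — 2 statements merged into one kernel-verified Lean document; each statement's English description precedes it below -/
import Mathlib

section
/- Let D ≥ 0 be an integer and assume the induction hypothesis H(D): for every m ≥ 1 and all natural numbers p_1, …, p_m, q_1, …, q_m with Σ_k (p_k + q_k) ≤ D, the product Π_{k=1}^m tr(A^{p_k} B^{q_k}) agrees at every point of Ŝ_n with some element of Lie(ℱ). Then for every l ≥ 1, every m ≥ 0, all integers i_1, …, i_l ≥ 2 and all natural numbers p_1, …, p_m, q_1, …, q_m with Σ_a i_a + Σ_b (p_b + q_b) ≤ D + 4, the product (Π_{a=1}^l tr(A^{i_a})) · Π_{b=1}^m tr(A^{p_b} B^{q_b}) agrees at every point of Ŝ_n with some element of Lie(ℱ). -/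
open MvPolynomial Matrix

/-- Polynomial functions on `M_n(ℂ) × M_n(ℂ)`, represented as polynomials in the
entries of the two matrices. -/
abbrev PolyFun (n : ℕ) := MvPolynomial ((Fin n × Fin n) ⊕ (Fin n × Fin n)) ℂ

/-- The matrix of coordinate functions `X_{jk}`. -/
noncomputable def Xmat (n : ℕ) : Matrix (Fin n) (Fin n) (PolyFun n) :=
  fun i j => MvPolynomial.X (Sum.inl (i, j))

/-- The matrix of coordinate functions `Y_{jk}`. -/
noncomputable def Ymat (n : ℕ) : Matrix (Fin n) (Fin n) (PolyFun n) :=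
  fun i j => MvPolynomial.X (Sum.inr (i, j))

/-- Traceless part `A = X - (tr X / n) I_n`. -/
noncomputable def Amat (n : ℕ) : Matrix (Fin n) (Fin n) (PolyFun n) :=
  Xmat n - (MvPolynomial.C ((n : ℂ)⁻¹) * Matrix.trace (Xmat n)) • (1 : Matrix (Fin n) (Fin n) (PolyFun n))

/-- Traceless part `B = Y - (tr Y / n) I_n`. -/
noncomputable def Bmat (n : ℕ) : Matrix (Fin n) (Fin n) (PolyFun n) :=
  Ymat n - (MvPolynomial.C ((n : ℂ)⁻¹) * Matrix.trace (Ymat n)) • (1 : Matrix (Fin n) (Fin n) (PolyFun n))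

/-- The polynomial function `(X,Y) ↦ tr (A^p B^q)`. -/
noncomputable def trAB (n p q : ℕ) : PolyFun n :=
  Matrix.trace (Amat n ^ p * Bmat n ^ q)

/-- The polynomial function `(X,Y) ↦ tr (X^a Y^b)`. -/
noncomputable def trXY (n a b : ℕ) : PolyFun n :=
  Matrix.trace (Xmat n ^ a * Ymat n ^ b)

/-- The Poisson bracket
`{F,G} = Σ_{j,k} ∂F/∂X_{jk} ∂G/∂Y_{kj} − ∂F/∂Y_{jk} ∂G/∂X_{kj}`. -/
noncomputable def pbracket {n : ℕ} (F G : PolyFun n) : PolyFun n :=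
  ∑ j : Fin n, ∑ k : Fin n,
    (MvPolynomial.pderiv (Sum.inl (j, k)) F * MvPolynomial.pderiv (Sum.inr (k, j)) G
      - MvPolynomial.pderiv (Sum.inr (j, k)) F * MvPolynomial.pderiv (Sum.inl (k, j)) G)

/-- Evaluation of a polynomial function at a pair of matrices. -/
noncomputable def evalP {n : ℕ} (X Y : Matrix (Fin n) (Fin n) ℂ) (F : PolyFun n) : ℂ :=
  MvPolynomial.eval (Sum.elim (fun p => X p.1 p.2) (fun p => Y p.1 p.2)) F

/-- The Calogero–Moser variety `Ĉ_n = {(X,Y) : rank([X,Y] − i I_n) = 1}`. -/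
def Chat (n : ℕ) : Set (Matrix (Fin n) (Fin n) ℂ × Matrix (Fin n) (Fin n) ℂ) :=
  {P | ((P.1 * P.2 - P.2 * P.1) - Complex.I • (1 : Matrix (Fin n) (Fin n) ℂ)).rank = 1}

/-- The traceless Calogero–Moser variety
`Ŝ_n = {(X,Y) : tr X = tr Y = 0, rank([X,Y] − i I_n) = 1}`. -/
def Shat (n : ℕ) : Set (Matrix (Fin n) (Fin n) ℂ × Matrix (Fin n) (Fin n) ℂ) :=
  {P | Matrix.trace P.1 = 0 ∧ Matrix.trace P.2 = 0 ∧
    ((P.1 * P.2 - P.2 * P.1) - Complex.I • (1 : Matrix (Fin n) (Fin n) ℂ)).rank = 1}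

/-- The set `ℱ = {tr A², tr B², tr A³, (tr AB)²}`. -/
noncomputable def calF (n : ℕ) : Set (PolyFun n) :=
  {trAB n 2 0, trAB n 0 2, trAB n 3 0, (trAB n 1 1) ^ 2}

/-- The smallest ℂ-linear subspace of the polynomial functions containing `S`
and closed under the Poisson bracket. -/
inductive LieGen (n : ℕ) (S : Set (PolyFun n)) : PolyFun n → Prop
  | base {f : PolyFun n} : f ∈ S → LieGen n S f
  | zero : LieGen n S 0
  | add {f g : PolyFun n} : LieGen n S f → LieGen n S g → LieGen n S (f + g)
  | smul (c : ℂ) {f : PolyFun n} : LieGen n S f → LieGen n S (c • f)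
  | bracket {f g : PolyFun n} : LieGen n S f → LieGen n S g → LieGen n S (pbracket f g)

/-!
The Poisson bracket with any of the four functions of `ℱ` kills the entries of the moment matrix
`Θ = [A, B] - i`, so the bracket preserves the ideal generated by the `2 × 2` minors of `Θ`, and one
may compute modulo this ideal, whose elements vanish on `Shat n`. There `Θ` behaves as a matrix of
rank one, `tr (U Θ V Θ) = tr (U Θ) tr (V Θ)`, whence the trace of a word in `A` and `B` depends, up
to products of traces of lower degree, only on how often each letter occurs.

If `n ≥ 2`, all products of traces lie in the Lie algebra modulo the ideal. For the constants this
is `tr Θ² = (tr Θ)²`, which expresses `n - n²` through `tr ABAB` and `tr A²B²`. The others are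
reached by induction on the degree, then on the number of factors. Bracketing with `tr B²` trades a
letter `A` for a letter `B`, so one factor may be assumed to be `tr A^p`. Since `A` and `B` are
traceless parts, bracketing with `tr A^(p+1)` replaces one `B` not only by `A^p` but also by a
multiple of `tr A^p`, which creates the new factor. If `n = 1` then `A = 0`.
-/

namespace CalogeroMoser

section Ring

variable {R : Type*} [Ring R]

theorem map_pow_of_leibniz (δ : R →+ R) (hδ : ∀ a b, δ (a * b) = δ a * b + a * δ b) (a : R)
    (p : ℕ) : δ (a ^ p) = ∑ i ∈ Finset.range p, a ^ i * δ a * a ^ (p - 1 - i) := by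
  induction p with
  | zero => simpa using hδ 1 1
  | succ p ih =>
    rw [pow_succ, hδ, ih, Finset.sum_range_succ, Finset.sum_mul]
    congr 1
    · refine Finset.sum_congr rfl fun i hi => ?_
      have hi : i < p := Finset.mem_range.mp hi
      rw [mul_assoc, ← pow_succ, show p - 1 - i + 1 = p + 1 - 1 - i by omega]
    · simp

theorem mul_pow_sub_pow_mul (a b : R) (q : ℕ) :
    a * b ^ q - b ^ q * a
      = ∑ i ∈ Finset.range q, b ^ i * (a * b - b * a) * b ^ (q - 1 - i) := by
  refine map_pow_of_leibniz (AddMonoidHom.mulLeft a - AddMonoidHom.mulRight a)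
    (fun x y => ?_) b q
  simp only [AddMonoidHom.sub_apply, AddMonoidHom.coe_mulLeft, AddMonoidHom.mulRight_apply]
  noncomm_ring

end Ring

section Minors

variable {ι R : Type*} [CommRing R]

/-- The ideal generated by the `2 × 2` minors of a square matrix. -/
def minorsIdeal (M : Matrix ι ι R) : Ideal R :=
  Ideal.span {x | ∃ a b c d, M a c * M b d - M a d * M b c = x}

theorem derivation_mem_minorsIdeal {𝕜 : Type*} [CommRing 𝕜] [Algebra 𝕜 R]
    {M : Matrix ι ι R} {δ : Derivation 𝕜 R R} (hδ : ∀ a b, δ (M a b) = 0) {x : R}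
    (hx : x ∈ minorsIdeal M) : δ x ∈ minorsIdeal M := by
  induction hx using Submodule.span_induction with
  | mem x hx =>
    obtain ⟨a, b, c, d, rfl⟩ := hx
    simp [hδ]
  | zero => simp
  | add x y _ _ hx hy => rw [map_add]; exact add_mem hx hy
  | smul r x hx hδx =>
    rw [smul_eq_mul, Derivation.leibniz, smul_eq_mul, smul_eq_mul]
    exact add_mem (Ideal.mul_mem_left _ _ hδx) (Ideal.mul_mem_right _ _ hx)

theorem trace_mul_mul_mul_sub_mem_minorsIdeal [Fintype ι] (U M V : Matrix ι ι R) :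
    (U * M * V * M).trace - (U * M).trace * (V * M).trace ∈ minorsIdeal M := by
  have expand_trace : (U * M * V * M).trace =
      ∑ a, ∑ d, ∑ c, ∑ b, U a b * V c d * (M b c * M d a) := by
    simp only [Matrix.trace, Matrix.diag, Matrix.mul_apply, Finset.sum_mul]
    refine Finset.sum_congr rfl fun a _ => Finset.sum_congr rfl fun d _ =>
      Finset.sum_congr rfl fun c _ => Finset.sum_congr rfl fun b _ => by ring
  have expand_mul : (U * M).trace * (V * M).trace =
      ∑ a, ∑ d, ∑ c, ∑ b, U a b * V c d * (M b a * M d c) := by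
    simp only [Matrix.trace, Matrix.diag, Matrix.mul_apply, Finset.sum_mul_sum]
    refine Finset.sum_congr rfl fun a _ => ?_
    conv_rhs => rw [Finset.sum_comm]
    refine Finset.sum_congr rfl fun c _ => ?_
    rw [Finset.sum_comm]
    exact Finset.sum_congr rfl fun d _ => Finset.sum_congr rfl fun b _ => by ring
  rw [expand_trace, expand_mul]
  simp only [← Finset.sum_sub_distrib, ← mul_sub]
  exact sum_mem fun a _ => sum_mem fun d _ => sum_mem fun c _ => sum_mem fun b _ =>
    Ideal.mul_mem_left _ _ (Ideal.subset_span ⟨b, d, c, a, rfl⟩)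

theorem minor_eq_zero_of_rank_le_one {K : Type*} [Field K] [Fintype ι] {M : Matrix ι ι K}
    (hM : M.rank ≤ 1) (a b c d : ι) : M a c * M b d - M a d * M b c = 0 := by
  classical
  rw [Matrix.rank, finrank_le_one_iff] at hM
  obtain ⟨v, hv⟩ := hM
  have entry : ∀ j, ∃ w : K, ∀ i, M i j = w * v.1 i := fun j => by
    obtain ⟨w, hw⟩ := hv ⟨M.mulVecLin (Pi.single j 1), LinearMap.mem_range_self _ _⟩
    refine ⟨w, fun i => ?_⟩
    simpa using (congrFun (congrArg Subtype.val hw) i).symm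
  obtain ⟨w, hw⟩ := entry c
  obtain ⟨w', hw'⟩ := entry d
  rw [hw, hw, hw', hw']
  ring

theorem minorsIdeal_le_ker_of_rank_map_le_one {K : Type*} [Field K] [Fintype ι]
    {M : Matrix ι ι R} {φ : R →+* K} (h : (M.map φ).rank ≤ 1) :
    minorsIdeal M ≤ RingHom.ker φ := by
  refine Ideal.span_le.mpr ?_
  rintro _ ⟨a, b, c, d, rfl⟩
  simpa [RingHom.mem_ker] using minor_eq_zero_of_rank_le_one h a b c d

end Minors

theorem smul_one_map {ι R S F : Type*} [DecidableEq ι] [NonAssocSemiring R] [NonAssocSemiring S]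
    [FunLike F R S] [ZeroHomClass F R S] (f : F) (r : R) :
    (r • (1 : Matrix ι ι R)).map f = f r • 1 := by
  rw [Matrix.smul_one_eq_diagonal, Matrix.diagonal_map (map_zero f), Matrix.smul_one_eq_diagonal]

section Derivation

variable {ι R 𝕜 : Type*} [Fintype ι] [CommRing R] [CommRing 𝕜] [Algebra 𝕜 R]
  (δ : Derivation 𝕜 R R)

theorem mul_map_derivation (M N : Matrix ι ι R) :
    (M * N).map δ = M.map δ * N + M * N.map δ := by
  ext a b
  simp only [Matrix.map_apply, Matrix.mul_apply, Matrix.add_apply, map_sum, Derivation.leibniz,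
    smul_eq_mul, ← Finset.sum_add_distrib]
  exact Finset.sum_congr rfl fun _ _ => by ring

variable [DecidableEq ι]

theorem pow_map_derivation (M : Matrix ι ι R) (p : ℕ) :
    (M ^ p).map δ = ∑ i ∈ Finset.range p, M ^ i * M.map δ * M ^ (p - 1 - i) :=
  map_pow_of_leibniz (AddMonoidHom.mapMatrix (δ : R →ₗ[𝕜] R).toAddMonoidHom)
    (mul_map_derivation δ) M p

theorem derivation_trace_pow (M : Matrix ι ι R) (p : ℕ) :
    δ (M ^ p).trace = p • (M ^ (p - 1) * M.map δ).trace := by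
  rw [AddMonoidHom.map_trace, pow_map_derivation, Matrix.trace_sum]
  have cyclic : ∀ i ∈ Finset.range p,
      (M ^ i * M.map δ * M ^ (p - 1 - i)).trace = (M ^ (p - 1) * M.map δ).trace := by
    intro i hi
    have hi : i < p := Finset.mem_range.mp hi
    rw [Matrix.trace_mul_comm, ← mul_assoc, ← pow_add, show p - 1 - i + i = p - 1 by omega]
  rw [Finset.sum_congr rfl cyclic, Finset.sum_const, Finset.card_range]

end Derivation

section TracelessPart

variable {ι R : Type*} (𝕜 : Type*) [Fintype ι] [DecidableEq ι] [CommRing R] [Field 𝕜]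
  [Algebra 𝕜 R]

/-- The projection `M ↦ M - (tr M / N) 1` of the `N × N` matrices over a `𝕜`-algebra to the
traceless ones. -/
def tracelessPart : Matrix ι ι R →ₗ[R] Matrix ι ι R where
  toFun M := M - ((Fintype.card ι : 𝕜)⁻¹ • M.trace) • 1
  map_add' M N := by rw [Matrix.trace_add, smul_add, add_smul]; abel
  map_smul' r M := by
    rw [Matrix.trace_smul, smul_comm _ r, smul_assoc, smul_sub, RingHom.id_apply]

theorem tracelessPart_apply (M : Matrix ι ι R) :
    tracelessPart 𝕜 M = M - ((Fintype.card ι : 𝕜)⁻¹ • M.trace) • 1 := rfl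

theorem trace_tracelessPart (hι : (Fintype.card ι : 𝕜) ≠ 0) (M : Matrix ι ι R) :
    (tracelessPart 𝕜 M).trace = 0 := by
  have card_smul : M.trace * (Fintype.card ι : R) = (Fintype.card ι : 𝕜) • M.trace := by
    rw [Nat.cast_smul_eq_nsmul, nsmul_eq_mul, mul_comm]
  rw [tracelessPart_apply, Matrix.trace_sub, Matrix.trace_smul, Matrix.trace_one, smul_eq_mul,
    smul_mul_assoc, card_smul, inv_smul_smul₀ hι, sub_self]

theorem tracelessPart_eq_self {M : Matrix ι ι R} (hM : M.trace = 0) :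
    tracelessPart 𝕜 M = M := by
  rw [tracelessPart_apply, hM, smul_zero, zero_smul, sub_zero]

theorem trace_mul_tracelessPart (M N : Matrix ι ι R) :
    (M * tracelessPart 𝕜 N).trace = (tracelessPart 𝕜 M * N).trace := by
  simp only [tracelessPart_apply, mul_sub, sub_mul, Matrix.trace_sub, Matrix.mul_smul,
    mul_one, one_mul, Matrix.trace_smul, smul_eq_mul, smul_mul_assoc,
    mul_comm M.trace]

theorem commute_tracelessPart {M N : Matrix ι ι R} (h : Commute M N) :
    Commute M (tracelessPart 𝕜 N) :=
  h.sub_right ((Commute.one_right M).smul_right _)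

variable {𝕜} in
theorem tracelessPart_map_derivation (δ : Derivation 𝕜 R R) (M : Matrix ι ι R) :
    (tracelessPart 𝕜 M).map δ = tracelessPart 𝕜 (M.map δ) := by
  rw [tracelessPart_apply, Matrix.map_sub _ (map_sub δ), smul_one_map,
    Derivation.map_smul, AddMonoidHom.map_trace, tracelessPart_apply]

end TracelessPart

variable {n : ℕ}

section Bracket

/-- The Hamiltonian derivation `{F, ·}`. -/
noncomputable def ham : PolyFun n →ₗ[ℂ] Derivation ℂ (PolyFun n) (PolyFun n) where
  toFun F := ∑ j : Fin n, ∑ k : Fin n,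
    (pderiv (Sum.inl (j, k)) F • pderiv (Sum.inr (k, j))
      - pderiv (Sum.inr (j, k)) F • pderiv (Sum.inl (k, j)))
  map_add' F G := by
    simp only [map_add, add_smul, add_sub_add_comm, Finset.sum_add_distrib]
  map_smul' c F := by
    simp only [Derivation.map_smul, smul_assoc, smul_sub, Finset.smul_sum, RingHom.id_apply]

theorem ham_apply (F G : PolyFun n) : ham F G = pbracket F G := by
  have sum_apply : ∀ f : Fin n → Derivation ℂ (PolyFun n) (PolyFun n),
      (∑ j, f j) G = ∑ j, f j G := fun f =>
    map_sum ({ toFun := fun d => d G, map_zero' := rfl, map_add' := fun _ _ => rfl } :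
      Derivation ℂ (PolyFun n) (PolyFun n) →+ PolyFun n) f Finset.univ
  simp only [ham, pbracket, LinearMap.coe_mk, AddHom.coe_mk, sum_apply, Derivation.sub_apply,
    Derivation.smul_apply, smul_eq_mul]

theorem ham_antisymm (F G : PolyFun n) : ham F G = -ham G F := by
  rw [ham_apply, ham_apply, pbracket, pbracket, Finset.sum_comm, ← Finset.sum_neg_distrib]
  refine Finset.sum_congr rfl fun j _ => ?_
  rw [← Finset.sum_neg_distrib]
  exact Finset.sum_congr rfl fun k _ => by ring

theorem ham_mul_apply (F G K : PolyFun n) : ham (F * G) K = F * ham G K + G * ham F K := by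
  rw [ham_antisymm, Derivation.leibniz, ham_antisymm K, ham_antisymm K, smul_eq_mul, smul_eq_mul]
  ring

theorem ham_X_inl (F : PolyFun n) (j k : Fin n) :
    ham F (X (Sum.inl (j, k))) = -pderiv (Sum.inr (k, j)) F := by
  rw [ham_apply]
  simp only [pbracket, pderiv_X, Pi.single_apply, Sum.inl.injEq, Prod.mk.injEq, reduceCtorEq,
    if_false, mul_zero, zero_sub, Finset.sum_neg_distrib]
  rw [Finset.sum_eq_single k, Finset.sum_eq_single j] <;> simp +contextual [eq_comm]

theorem ham_X_inr (F : PolyFun n) (j k : Fin n) :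
    ham F (X (Sum.inr (j, k))) = pderiv (Sum.inl (k, j)) F := by
  rw [ham_apply]
  simp only [pbracket, pderiv_X, Pi.single_apply, Sum.inr.injEq, Prod.mk.injEq, reduceCtorEq,
    if_false, mul_zero, sub_zero]
  rw [Finset.sum_eq_single k, Finset.sum_eq_single j] <;> simp +contextual [eq_comm]

theorem pderiv_comm {σ R : Type*} [CommRing R] (i j : σ) (f : MvPolynomial σ R) :
    pderiv i (pderiv j f) = pderiv j (pderiv i f) := by
  classical
  have commutator_eq_zero : ⁅(pderiv i : Derivation R (MvPolynomial σ R) (MvPolynomial σ R)),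
      (pderiv j : Derivation R (MvPolynomial σ R) (MvPolynomial σ R))⁆ = 0 := by
    refine MvPolynomial.derivation_ext fun k => ?_
    rw [Derivation.commutator_apply, pderiv_X, pderiv_X, Pi.single_apply, Pi.single_apply]
    split_ifs <;> simp
  simpa [Derivation.commutator_apply, sub_eq_zero] using DFunLike.congr_fun commutator_eq_zero f

theorem pderiv_ham (v : (Fin n × Fin n) ⊕ (Fin n × Fin n)) (F G : PolyFun n) :
    pderiv v (ham F G) = ham (pderiv v F) G + ham F (pderiv v G) := by
  simp only [ham_apply, pbracket, map_sum, map_sub, Derivation.leibniz, smul_eq_mul,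
    ← Finset.sum_add_distrib]
  refine Finset.sum_congr rfl fun j _ => Finset.sum_congr rfl fun k _ => ?_
  simp only [pderiv_comm v (Sum.inl _), pderiv_comm v (Sum.inr _)]
  ring

-- The Jacobi identity: both sides are derivations, so they need only agree on coordinates.
theorem ham_ham (F G : PolyFun n) : ham (ham F G) = ⁅ham F, ham G⁆ := by
  refine MvPolynomial.derivation_ext fun v => ?_
  rw [Derivation.commutator_apply]
  rcases v with ⟨j, k⟩ | ⟨j, k⟩
  · rw [ham_X_inl, ham_X_inl, ham_X_inl, pderiv_ham, map_neg, map_neg,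
      ham_antisymm (pderiv (Sum.inr (k, j)) F)]
    ring
  · rw [ham_X_inr, ham_X_inr, ham_X_inr, pderiv_ham, ham_antisymm (pderiv (Sum.inl (k, j)) F)]
    ring

end Bracket

section Flows

theorem Amat_eq_tracelessPart : Amat n = tracelessPart ℂ (Xmat n) := by
  rw [Amat, tracelessPart_apply, Fintype.card_fin, MvPolynomial.smul_eq_C_mul]

theorem Bmat_eq_tracelessPart : Bmat n = tracelessPart ℂ (Ymat n) := by
  rw [Bmat, tracelessPart_apply, Fintype.card_fin, MvPolynomial.smul_eq_C_mul]

theorem trace_tracelessPart_fin (hn : 1 ≤ n) (M : Matrix (Fin n) (Fin n) (PolyFun n)) :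
    (tracelessPart ℂ M).trace = 0 :=
  trace_tracelessPart ℂ (by rw [Fintype.card_fin]; exact_mod_cast (by omega : n ≠ 0)) M

theorem trace_Amat (hn : 1 ≤ n) : (Amat n).trace = 0 := by
  rw [Amat_eq_tracelessPart, trace_tracelessPart_fin hn]

theorem trace_Bmat (hn : 1 ≤ n) : (Bmat n).trace = 0 := by
  rw [Bmat_eq_tracelessPart, trace_tracelessPart_fin hn]

theorem Xmat_map_pderiv_inl (j k : Fin n) :
    (Xmat n).map (pderiv (Sum.inl (j, k))) = Matrix.single j k 1 := by
  ext1 a b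
  simp [Xmat, pderiv_X, Pi.single_apply, Matrix.single_apply, eq_comm]

theorem Ymat_map_pderiv_inr (j k : Fin n) :
    (Ymat n).map (pderiv (Sum.inr (j, k))) = Matrix.single j k 1 := by
  ext1 a b
  simp [Ymat, pderiv_X, Pi.single_apply, Matrix.single_apply, eq_comm]

theorem Xmat_map_pderiv_inr (j k : Fin n) : (Xmat n).map (pderiv (Sum.inr (j, k))) = 0 := by
  ext1 a b
  simp [Xmat]

theorem Ymat_map_pderiv_inl (j k : Fin n) : (Ymat n).map (pderiv (Sum.inl (j, k))) = 0 := by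
  ext1 a b
  simp [Ymat]

theorem pderiv_inl_trace_Amat_pow (p : ℕ) (j k : Fin n) :
    pderiv (Sum.inl (j, k)) (Amat n ^ p).trace = p • tracelessPart ℂ (Amat n ^ (p - 1)) k j := by
  rw [derivation_trace_pow, Amat_eq_tracelessPart, tracelessPart_map_derivation,
    Xmat_map_pderiv_inl, trace_mul_tracelessPart, Matrix.trace_mul_single, MulOpposite.op_one,
    one_smul]

theorem pderiv_inr_trace_Bmat_pow (q : ℕ) (j k : Fin n) :
    pderiv (Sum.inr (j, k)) (Bmat n ^ q).trace = q • tracelessPart ℂ (Bmat n ^ (q - 1)) k j := by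
  rw [derivation_trace_pow, Bmat_eq_tracelessPart, tracelessPart_map_derivation,
    Ymat_map_pderiv_inr, trace_mul_tracelessPart, Matrix.trace_mul_single, MulOpposite.op_one,
    one_smul]

theorem pderiv_inr_trace_Amat_pow (p : ℕ) (j k : Fin n) :
    pderiv (Sum.inr (j, k)) (Amat n ^ p).trace = 0 := by
  rw [derivation_trace_pow, Amat_eq_tracelessPart, tracelessPart_map_derivation,
    Xmat_map_pderiv_inr, map_zero, mul_zero, Matrix.trace_zero, smul_zero]

theorem pderiv_inl_trace_Bmat_pow (q : ℕ) (j k : Fin n) :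
    pderiv (Sum.inl (j, k)) (Bmat n ^ q).trace = 0 := by
  rw [derivation_trace_pow, Bmat_eq_tracelessPart, tracelessPart_map_derivation,
    Ymat_map_pderiv_inl, map_zero, mul_zero, Matrix.trace_zero, smul_zero]

theorem Amat_map_ham_trace_Amat_pow (p : ℕ) : (Amat n).map (ham (Amat n ^ p).trace) = 0 := by
  have hX : (Xmat n).map (ham (Amat n ^ p).trace) = 0 := by
    ext1 j k
    rw [Matrix.map_apply, Xmat, ham_X_inl, pderiv_inr_trace_Amat_pow, neg_zero, Matrix.zero_apply]
  conv_lhs => rw [Amat_eq_tracelessPart, tracelessPart_map_derivation, ← Amat_eq_tracelessPart, hX]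
  exact map_zero _

theorem Bmat_map_ham_trace_Amat_pow (hn : 1 ≤ n) (p : ℕ) :
    (Bmat n).map (ham (Amat n ^ p).trace) = p • tracelessPart ℂ (Amat n ^ (p - 1)) := by
  have hY : (Ymat n).map (ham (Amat n ^ p).trace)
      = p • tracelessPart ℂ (Amat n ^ (p - 1)) := by
    ext1 j k
    rw [Matrix.map_apply, Ymat, ham_X_inr, pderiv_inl_trace_Amat_pow, Matrix.smul_apply]
  rw [Bmat_eq_tracelessPart, tracelessPart_map_derivation, hY, map_nsmul,
    tracelessPart_eq_self _ (trace_tracelessPart_fin hn _)]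

theorem Bmat_map_ham_trace_Bmat_pow (q : ℕ) : (Bmat n).map (ham (Bmat n ^ q).trace) = 0 := by
  have hY : (Ymat n).map (ham (Bmat n ^ q).trace) = 0 := by
    ext1 j k
    rw [Matrix.map_apply, Ymat, ham_X_inr, pderiv_inl_trace_Bmat_pow, Matrix.zero_apply]
  conv_lhs => rw [Bmat_eq_tracelessPart, tracelessPart_map_derivation, ← Bmat_eq_tracelessPart, hY]
  exact map_zero _

theorem Amat_map_ham_trace_Bmat_pow (hn : 1 ≤ n) (q : ℕ) :
    (Amat n).map (ham (Bmat n ^ q).trace) = -(q • tracelessPart ℂ (Bmat n ^ (q - 1))) := by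
  have hX : (Xmat n).map (ham (Bmat n ^ q).trace)
      = -(q • tracelessPart ℂ (Bmat n ^ (q - 1))) := by
    ext1 j k
    rw [Matrix.map_apply, Xmat, ham_X_inl, pderiv_inr_trace_Bmat_pow, Matrix.neg_apply,
      Matrix.smul_apply]
  rw [Amat_eq_tracelessPart, tracelessPart_map_derivation, hX, map_neg, map_nsmul,
    tracelessPart_eq_self _ (trace_tracelessPart_fin hn _)]

end Flows

section MomentMap

variable (n) in
/-- The moment matrix `[A, B] - i`, which has rank one on `Shat n`. -/
noncomputable def Theta : Matrix (Fin n) (Fin n) (PolyFun n) :=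
  Amat n * Bmat n - Bmat n * Amat n - (C Complex.I : PolyFun n) • 1

theorem Amat_mul_Bmat :
    Amat n * Bmat n = Bmat n * Amat n + Theta n + (C Complex.I : PolyFun n) • 1 := by
  rw [Theta]
  abel

variable (n) in
/-- The polynomial functions which Poisson commute with all entries of the moment matrix. -/
noncomputable def momentInvariants : Subalgebra ℂ (PolyFun n) where
  carrier := {f | ∀ a b, ham f (Theta n a b) = 0}
  add_mem' hf hg a b := by rw [map_add, Derivation.add_apply, hf, hg, add_zero]
  mul_mem' hf hg a b := by rw [ham_mul_apply, hf, hg, mul_zero, mul_zero, add_zero]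
  algebraMap_mem' c a b := by rw [ham_antisymm, Derivation.map_algebraMap, neg_zero]

theorem ham_mem_momentInvariants {f g : PolyFun n} (hf : f ∈ momentInvariants n)
    (hg : g ∈ momentInvariants n) : ham f g ∈ momentInvariants n := fun a b => by
  rw [ham_ham, Derivation.commutator_apply, hf, hg, map_zero, map_zero, sub_zero]

theorem Theta_map_derivation (δ : Derivation ℂ (PolyFun n) (PolyFun n)) :
    (Theta n).map δ = ((Amat n).map δ * Bmat n - Bmat n * (Amat n).map δ)
      + (Amat n * (Bmat n).map δ - (Bmat n).map δ * Amat n) := by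
  rw [Theta, Matrix.map_sub _ (map_sub δ), Matrix.map_sub _ (map_sub δ), mul_map_derivation,
    mul_map_derivation, smul_one_map, MvPolynomial.derivation_C, zero_smul]
  abel

theorem mem_momentInvariants_of_commute {f : PolyFun n}
    (hA : Commute (Bmat n) ((Amat n).map (ham f))) (hB : Commute (Amat n) ((Bmat n).map (ham f))) :
    f ∈ momentInvariants n := by
  have Theta_map : (Theta n).map (ham f) = 0 := by
    rw [Theta_map_derivation, hA.eq, hB.eq, sub_self, sub_self, add_zero]
  exact fun a b => congrFun (congrFun Theta_map a) b

theorem trAB_right_zero (p : ℕ) : trAB n p 0 = (Amat n ^ p).trace := by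
  rw [trAB, pow_zero, mul_one]

theorem trAB_left_zero (q : ℕ) : trAB n 0 q = (Bmat n ^ q).trace := by
  rw [trAB, pow_zero, one_mul]

theorem trAB_right_zero_mem_momentInvariants (hn : 1 ≤ n) (p : ℕ) :
    trAB n p 0 ∈ momentInvariants n := by
  rw [trAB_right_zero]
  refine mem_momentInvariants_of_commute ?_ ?_
  · rw [Amat_map_ham_trace_Amat_pow]
    exact Commute.zero_right _
  · rw [Bmat_map_ham_trace_Amat_pow hn]
    exact (commute_tracelessPart ℂ (Commute.self_pow _ _)).smul_right _

theorem trAB_left_zero_mem_momentInvariants (hn : 1 ≤ n) (q : ℕ) :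
    trAB n 0 q ∈ momentInvariants n := by
  rw [trAB_left_zero]
  refine mem_momentInvariants_of_commute ?_ ?_
  · rw [Amat_map_ham_trace_Bmat_pow hn]
    exact ((commute_tracelessPart ℂ (Commute.self_pow _ _)).smul_right _).neg_right
  · rw [Bmat_map_ham_trace_Bmat_pow]
    exact Commute.zero_right _

end MomentMap

section TraceBrackets

theorem ham_trAB_right_zero (hn : 1 ≤ n) (p r s : ℕ) :
    ham (trAB n p 0) (trAB n r s) = (p : ℂ) • ((∑ i ∈ Finset.range s,
      (Amat n ^ r * Bmat n ^ i * Amat n ^ (p - 1) * Bmat n ^ (s - 1 - i)).trace)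
      - (s * (n : ℂ)⁻¹) • (trAB n (p - 1) 0 * trAB n r (s - 1))) := by
  have insert_tracelessPart : ∀ i ∈ Finset.range s,
      (Amat n ^ r * (Bmat n ^ i * (p • tracelessPart ℂ (Amat n ^ (p - 1)))
        * Bmat n ^ (s - 1 - i))).trace
      = (p : ℂ) • ((Amat n ^ r * Bmat n ^ i * Amat n ^ (p - 1) * Bmat n ^ (s - 1 - i)).trace
        - (n : ℂ)⁻¹ • (trAB n (p - 1) 0 * trAB n r (s - 1))) := by
    intro i hi
    have hi : i < s := Finset.mem_range.mp hi
    have split : Bmat n ^ (s - 1) = Bmat n ^ i * Bmat n ^ (s - 1 - i) := by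
      rw [← pow_add, show i + (s - 1 - i) = s - 1 by omega]
    rw [tracelessPart_apply, Fintype.card_fin, trAB_right_zero, trAB, split,
      ← Nat.cast_smul_eq_nsmul ℂ]
    simp only [Matrix.mul_smul, Matrix.trace_smul, mul_sub, sub_mul,
      Matrix.trace_sub, mul_one, mul_assoc, smul_mul_assoc, smul_eq_mul]
  have hA : (Amat n ^ r).map (ham (Amat n ^ p).trace) = 0 := by
    rw [pow_map_derivation, Amat_map_ham_trace_Amat_pow]
    simp only [mul_zero, zero_mul, Finset.sum_const_zero]
  rw [trAB_right_zero p, trAB, AddMonoidHom.map_trace, mul_map_derivation, hA, zero_mul, zero_add,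
    pow_map_derivation, Bmat_map_ham_trace_Amat_pow hn, Finset.mul_sum, Matrix.trace_sum,
    Finset.sum_congr rfl insert_tracelessPart, ← Finset.smul_sum, Finset.sum_sub_distrib,
    Finset.sum_const, Finset.card_range, ← Nat.cast_smul_eq_nsmul ℂ, smul_smul]

theorem ham_trAB_zero_two (hn : 1 ≤ n) (r s : ℕ) :
    ham (trAB n 0 2) (trAB n r s) = (-2 : ℂ) • ∑ i ∈ Finset.range r,
      (Amat n ^ i * Bmat n * Amat n ^ (r - 1 - i) * Bmat n ^ s).trace := by
  have hA : (Amat n).map (ham (Bmat n ^ 2).trace) = (-2 : ℂ) • Bmat n := by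
    rw [Amat_map_ham_trace_Bmat_pow hn, pow_one, tracelessPart_eq_self _ (trace_Bmat hn),
      ← Nat.cast_smul_eq_nsmul ℂ, neg_smul, Nat.cast_ofNat]
  have hB : (Bmat n ^ s).map (ham (Bmat n ^ 2).trace) = 0 := by
    rw [pow_map_derivation, Bmat_map_ham_trace_Bmat_pow]
    simp only [mul_zero, zero_mul, Finset.sum_const_zero]
  rw [trAB_left_zero, trAB, AddMonoidHom.map_trace, mul_map_derivation, hB, mul_zero, add_zero,
    pow_map_derivation, hA, Finset.sum_mul, Matrix.trace_sum, Finset.smul_sum]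
  simp only [Matrix.mul_smul, Matrix.smul_mul, Matrix.trace_smul]

theorem ham_trAB_right_zero_right_zero (hn : 1 ≤ n) (p r : ℕ) :
    ham (trAB n p 0) (trAB n r 0) = 0 := by
  rw [ham_trAB_right_zero hn, Finset.sum_range_zero, Nat.cast_zero, zero_mul, zero_smul, sub_zero,
    smul_zero]

theorem ham_trAB_right_zero_one (hn : 1 ≤ n) (p r : ℕ) : ham (trAB n p 0) (trAB n r 1)
    = (p : ℂ) • (trAB n (r + (p - 1)) 0 - (n : ℂ)⁻¹ • (trAB n (p - 1) 0 * trAB n r 0)) := by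
  rw [ham_trAB_right_zero hn, Finset.sum_range_one, Nat.cast_one, one_mul, Nat.sub_self, pow_zero,
    mul_one, mul_one, ← pow_add, trAB_right_zero (r + (p - 1))]

theorem ham_two_zero_one_one (hn : 1 ≤ n) :
    ham (trAB n 2 0) (trAB n 1 1) = (2 : ℂ) • trAB n 2 0 := by
  rw [ham_trAB_right_zero_one hn, trAB_right_zero (2 - 1), pow_one, trace_Amat hn, zero_mul,
    smul_zero, sub_zero, Nat.cast_ofNat]

theorem ham_two_zero_zero_two (hn : 1 ≤ n) :
    ham (trAB n 2 0) (trAB n 0 2) = (4 : ℂ) • trAB n 1 1 := by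
  have cyclic : (Bmat n * Amat n).trace = trAB n 1 1 := by
    rw [trAB, pow_one, pow_one, Matrix.trace_mul_comm]
  rw [ham_trAB_right_zero hn]
  simp only [Finset.sum_range_succ, Finset.sum_range_zero, trAB_right_zero, trAB_left_zero, pow_one,
    pow_zero, one_mul, mul_one, trace_Amat hn, zero_mul, smul_zero, sub_zero, zero_add, cyclic,
    Nat.sub_zero, Nat.sub_self, Nat.add_one_sub_one, Matrix.trace_mul_comm (Amat n) (Bmat n)]
  push_cast
  module

end TraceBrackets

section Filtration

variable (n) in
/-- The product of the traces `tr A ^ p B ^ q` over a list of pairs `(p, q)`. -/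
noncomputable def trProd (s : List (ℕ × ℕ)) : PolyFun n :=
  (s.map fun t => trAB n t.1 t.2).prod

@[simp] theorem trProd_nil : trProd n [] = 1 := rfl

@[simp] theorem trProd_cons (t : ℕ × ℕ) (s : List (ℕ × ℕ)) :
    trProd n (t :: s) = trAB n t.1 t.2 * trProd n s := rfl

theorem trProd_append (s t : List (ℕ × ℕ)) : trProd n (s ++ t) = trProd n s * trProd n t := by
  rw [trProd, List.map_append, List.prod_append, trProd, trProd]

/-- The total degree of `trProd n s` in the entries of `A` and `B`. -/
def deg (s : List (ℕ × ℕ)) : ℕ := (s.map fun t => t.1 + t.2).sum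

@[simp] theorem deg_cons (t : ℕ × ℕ) (s : List (ℕ × ℕ)) : deg (t :: s) = t.1 + t.2 + deg s := rfl

theorem deg_append (s t : List (ℕ × ℕ)) : deg (s ++ t) = deg s + deg t := by
  rw [deg, List.map_append, List.sum_append, deg, deg]

/-- A list of exponents without the factors `tr 1 = n` and `tr A = tr B = 0`, whose degree does not
reflect their size. -/
def Reduced (s : List (ℕ × ℕ)) : Prop := ∀ t ∈ s, 2 ≤ t.1 + t.2

theorem reduced_nil : Reduced [] := List.forall_mem_nil _

theorem reduced_cons {t : ℕ × ℕ} {s : List (ℕ × ℕ)} :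
    Reduced (t :: s) ↔ 2 ≤ t.1 + t.2 ∧ Reduced s := List.forall_mem_cons

theorem reduced_singleton {t : ℕ × ℕ} (ht : 2 ≤ t.1 + t.2) : Reduced [t] :=
  reduced_cons.mpr ⟨ht, reduced_nil⟩

theorem Reduced.append {s t : List (ℕ × ℕ)} (hs : Reduced s) (ht : Reduced t) :
    Reduced (s ++ t) := List.forall_mem_append.mpr ⟨hs, ht⟩

variable (n) in
/-- The ideal generated by the `2 × 2` minors of the moment matrix, all of whose elements vanish on
`Shat n`, as a linear subspace. -/
noncomputable def momentMinors : Submodule ℂ (PolyFun n) :=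
  (minorsIdeal (Theta n)).restrictScalars ℂ

variable (n) in
/-- The span of the reduced products of traces of degree at most `d`, modulo `momentMinors`. -/
noncomputable def filt (d : ℕ) : Submodule ℂ (PolyFun n) :=
  Submodule.span ℂ {f | ∃ s, Reduced s ∧ deg s ≤ d ∧ trProd n s = f} ⊔ momentMinors n

theorem momentMinors_le_filt (d : ℕ) : momentMinors n ≤ filt n d := le_sup_right

theorem trProd_mem_filt {s : List (ℕ × ℕ)} (hs : Reduced s) {d : ℕ} (hd : deg s ≤ d) :
    trProd n s ∈ filt n d :=
  Submodule.mem_sup_left (Submodule.subset_span ⟨s, hs, hd, rfl⟩)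

theorem filt_le {d : ℕ} {S : Submodule ℂ (PolyFun n)} (hminors : momentMinors n ≤ S)
    (hprod : ∀ s, Reduced s → deg s ≤ d → trProd n s ∈ S) : filt n d ≤ S := by
  refine sup_le (Submodule.span_le.mpr ?_) hminors
  rintro _ ⟨s, hs, hd, rfl⟩
  exact hprod s hs hd

theorem filt_mono : Monotone (filt n) := fun _ e h =>
  filt_le (momentMinors_le_filt e) fun _ hs hd => trProd_mem_filt hs (hd.trans h)

theorem mul_mem_filt {a b : ℕ} {f g : PolyFun n} (hf : f ∈ filt n a) (hg : g ∈ filt n b) :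
    f * g ∈ filt n (a + b) := by
  suffices h : filt n a ≤ (filt n (a + b)).comap (LinearMap.mulRight ℂ g) from h hf
  refine filt_le (fun j hj => momentMinors_le_filt _ (Ideal.mul_mem_right g _ hj)) fun s hs ds => ?_
  suffices h : filt n b ≤ (filt n (a + b)).comap (LinearMap.mulLeft ℂ (trProd n s)) from h hg
  refine filt_le (fun j hj => momentMinors_le_filt _ (Ideal.mul_mem_left _ _ hj)) fun t ht dt => ?_
  rw [Submodule.mem_comap, LinearMap.mulLeft_apply, ← trProd_append]
  exact trProd_mem_filt (hs.append ht) (by rw [deg_append]; omega)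

theorem one_mem_filt (d : ℕ) : (1 : PolyFun n) ∈ filt n d :=
  trProd_mem_filt reduced_nil (Nat.zero_le d)

theorem pow_mem_filt {d : ℕ} {f : PolyFun n} (hf : f ∈ filt n d) (k : ℕ) :
    f ^ k ∈ filt n (k * d) := by
  induction k with
  | zero => rw [pow_zero]; exact one_mem_filt _
  | succ k ih => rw [pow_succ, add_mul, one_mul]; exact mul_mem_filt ih hf

theorem prod_mem_filt {ι : Type*} (s : Finset ι) {f : ι → PolyFun n}
    (h : ∀ i ∈ s, ∃ d, f i ∈ filt n d) : ∃ d, ∏ i ∈ s, f i ∈ filt n d :=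
  Finset.prod_induction f (fun g => ∃ d, g ∈ filt n d)
    (fun _ _ ⟨a, ha⟩ ⟨b, hb⟩ => ⟨a + b, mul_mem_filt ha hb⟩) ⟨0, one_mem_filt 0⟩ h

theorem trAB_zero_zero : trAB n 0 0 = (n : ℂ) • (1 : PolyFun n) := by
  rw [trAB_right_zero, pow_zero, Matrix.trace_one, Fintype.card_fin, Nat.cast_smul_eq_nsmul,
    nsmul_one]

theorem trAB_eq_zero (hn : 1 ≤ n) {p q : ℕ} (h : p + q = 1) : trAB n p q = 0 := by
  obtain ⟨rfl, rfl⟩ | ⟨rfl, rfl⟩ : (p = 1 ∧ q = 0) ∨ (p = 0 ∧ q = 1) := by omega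
  · rw [trAB_right_zero, pow_one, trace_Amat hn]
  · rw [trAB_left_zero, pow_one, trace_Bmat hn]

theorem trAB_mem_filt (hn : 1 ≤ n) (p q : ℕ) : trAB n p q ∈ filt n (p + q) := by
  rcases Nat.lt_trichotomy (p + q) 1 with h | h | h
  · obtain ⟨rfl, rfl⟩ : p = 0 ∧ q = 0 := by omega
    rw [trAB_zero_zero]
    exact Submodule.smul_mem _ _ (one_mem_filt _)
  · rw [trAB_eq_zero hn h]
    exact zero_mem _
  · rw [← mul_one (trAB n p q)]
    exact trProd_mem_filt (s := [(p, q)]) (reduced_singleton h) le_rfl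

end Filtration

section Words

variable (n) in
/-- The product of a word in `A` (`true`) and `B` (`false`). -/
noncomputable def word (w : List Bool) : Matrix (Fin n) (Fin n) (PolyFun n) :=
  (w.map fun b => bif b then Amat n else Bmat n).prod

theorem word_append (u v : List Bool) : word n (u ++ v) = word n u * word n v := by
  rw [word, List.map_append, List.prod_append, word, word]

theorem word_true_cons (v : List Bool) : word n (true :: v) = Amat n * word n v := rfl

theorem word_false_cons (v : List Bool) : word n (false :: v) = Bmat n * word n v := rfl

theorem word_replicate_true (k : ℕ) : word n (List.replicate k true) = Amat n ^ k := by
  rw [word, List.map_replicate, List.prod_replicate, cond_true]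

theorem word_replicate_false (k : ℕ) : word n (List.replicate k false) = Bmat n ^ k := by
  rw [word, List.map_replicate, List.prod_replicate, cond_false]

/-- The sorted word `A ^ p B ^ q`. -/
def sortedWord (p q : ℕ) : List Bool := List.replicate p true ++ List.replicate q false

theorem word_sortedWord (p q : ℕ) : word n (sortedWord p q) = Amat n ^ p * Bmat n ^ q := by
  rw [sortedWord, word_append, word_replicate_true, word_replicate_false]

theorem perm_sortedWord {w : List Bool} {p q : ℕ} (hp : w.count true = p)
    (hq : w.count false = q) : w.Perm (sortedWord p q) := by
  rw [List.perm_iff_count, sortedWord]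
  rintro (_ | _) <;> simp [List.count_replicate, hp, hq]

theorem sub_mem_of_perm_of_swap {M : Type*} [AddCommGroup M] {S : AddSubgroup M}
    {g : List Bool → M} {d : ℕ}
    (hswap : ∀ u v : List Bool, u.length + v.length + 2 = d →
      g (u ++ true :: false :: v) - g (u ++ false :: true :: v) ∈ S)
    {w w' : List Bool} (hperm : w.Perm w') (u : List Bool) (hd : u.length + w.length = d) :
    g (u ++ w) - g (u ++ w') ∈ S := by
  induction hperm generalizing u with
  | nil => rw [sub_self]; exact zero_mem S
  | cons x _ ih => simpa using ih (u ++ [x]) (by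
      rw [List.length_append, List.length_singleton, add_assoc, add_comm 1]; exact hd)
  | swap x y l =>
    have hlength : u.length + l.length + 2 = d := by simpa [add_assoc] using hd
    rcases x with _ | _ <;> rcases y with _ | _
    · rw [sub_self]; exact zero_mem S
    · exact hswap u l hlength
    · rw [← neg_sub]; exact neg_mem (hswap u l hlength)
    · rw [sub_self]; exact zero_mem S
  | trans hperm _ ih ih' =>
    rw [← sub_add_sub_cancel]
    exact add_mem (ih u hd) (ih' u (by rwa [← hperm.length_eq]))

theorem trace_word_swap (u v : List Bool) :
    (word n (u ++ true :: false :: v)).trace - (word n (u ++ false :: true :: v)).trace =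
      (word n (v ++ u) * Theta n).trace + Complex.I • (word n (u ++ v)).trace := by
  have cyclic : (word n (v ++ u) * Theta n).trace = (word n u * Theta n * word n v).trace := by
    rw [word_append, Matrix.trace_mul_comm (word n u * Theta n), mul_assoc]
  rw [cyclic]
  simp only [word_append, word_true_cons, word_false_cons]
  rw [← mul_assoc (Amat n), Amat_mul_Bmat]
  simp only [add_mul, mul_add, Matrix.trace_add, Matrix.smul_mul, Matrix.mul_smul, one_mul,
    Matrix.trace_smul, MvPolynomial.smul_eq_C_mul, smul_eq_mul, mul_assoc]
  ring

theorem trace_word_mul_Theta_swap (u v : List Bool) :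
    (word n (u ++ true :: false :: v) * Theta n).trace
      - (word n (u ++ false :: true :: v) * Theta n).trace =
      (word n u * Theta n * word n v * Theta n).trace
        + Complex.I • (word n (u ++ v) * Theta n).trace := by
  simp only [word_append, word_true_cons, word_false_cons]
  rw [← mul_assoc (Amat n), Amat_mul_Bmat]
  simp only [add_mul, mul_add, Matrix.trace_add, Matrix.smul_mul, Matrix.mul_smul, one_mul,
    Matrix.trace_smul, MvPolynomial.smul_eq_C_mul, smul_eq_mul, mul_assoc]
  ring

theorem trace_word_sub_mem_of_perm {S : Submodule ℂ (PolyFun n)} {d : ℕ}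
    (hword : ∀ v : List Bool, v.length + 2 = d → (word n v).trace ∈ S)
    (hTheta : ∀ v : List Bool, v.length + 2 = d → (word n v * Theta n).trace ∈ S)
    {w w' : List Bool} (hd : w.length = d) (hperm : w.Perm w') :
    (word n w).trace - (word n w').trace ∈ S := by
  refine sub_mem_of_perm_of_swap (S := S.toAddSubgroup) (g := fun w => (word n w).trace)
    (fun u v huv => ?_) hperm [] (by simpa using hd)
  rw [trace_word_swap]
  exact add_mem (hTheta _ (by rw [List.length_append]; omega))
    (S.smul_mem _ (hword _ (by rw [List.length_append]; omega)))

theorem trace_word_mul_Theta_sub_mem_of_perm {S : Submodule ℂ (PolyFun n)} {d : ℕ}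
    (hminors : momentMinors n ≤ S)
    (hmul : ∀ u v : List Bool, u.length + v.length + 2 = d →
      (word n u * Theta n).trace * (word n v * Theta n).trace ∈ S)
    (hTheta : ∀ v : List Bool, v.length + 2 = d → (word n v * Theta n).trace ∈ S)
    {w w' : List Bool} (hd : w.length = d) (hperm : w.Perm w') :
    (word n w * Theta n).trace - (word n w' * Theta n).trace ∈ S := by
  refine sub_mem_of_perm_of_swap (S := S.toAddSubgroup) (g := fun w => (word n w * Theta n).trace)
    (fun u v huv => ?_) hperm [] (by simpa using hd)
  have factor := hminors (trace_mul_mul_mul_sub_mem_minorsIdeal (word n u) (Theta n) (word n v))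
  rw [trace_word_mul_Theta_swap]
  refine add_mem ?_ (S.smul_mem _ (hTheta _ (by rw [List.length_append]; omega)))
  rw [← sub_add_cancel (Matrix.trace _) ((word n u * Theta n).trace * (word n v * Theta n).trace)]
  exact add_mem factor (hmul u v huv)

-- `0 = tr (A ^ p [A, B ^ (q + 1)])`, where each of the `q + 1` commutators `[A, B]` is `Θ + i`.
theorem add_smul_trAB_mem {S : Submodule ℂ (PolyFun n)} {p q : ℕ} {θ : PolyFun n}
    (hθ : ∀ k l, k + l = q →
      (Amat n ^ p * Bmat n ^ k * Theta n * Bmat n ^ l).trace - θ ∈ S) :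
    θ + Complex.I • trAB n p q ∈ S := by
  have commutator_eq : ∀ k ∈ Finset.range (q + 1),
      (Amat n ^ p * (Bmat n ^ k * (Amat n * Bmat n - Bmat n * Amat n)
        * Bmat n ^ (q + 1 - 1 - k))).trace
      = ((Amat n ^ p * Bmat n ^ k * Theta n * Bmat n ^ (q - k)).trace - θ)
        + (θ + Complex.I • trAB n p q) := by
    intro k hk
    have hk : k < q + 1 := Finset.mem_range.mp hk
    have split : Bmat n ^ q = Bmat n ^ k * Bmat n ^ (q - k) := by
      rw [← pow_add, show k + (q - k) = q by omega]
    rw [trAB, split, Amat_mul_Bmat, add_tsub_cancel_right, add_assoc, add_sub_cancel_left]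
    simp only [add_mul, mul_add, Matrix.trace_add, Matrix.smul_mul, Matrix.mul_smul, mul_one,
      Matrix.trace_smul, MvPolynomial.smul_eq_C_mul, smul_eq_mul, mul_assoc]
    ring
  have sum_eq_zero : ∑ k ∈ Finset.range (q + 1),
      (((Amat n ^ p * Bmat n ^ k * Theta n * Bmat n ^ (q - k)).trace - θ)
        + (θ + Complex.I • trAB n p q)) = 0 := by
    rw [← Finset.sum_congr rfl commutator_eq, ← Matrix.trace_sum, ← Finset.mul_sum,
      ← mul_pow_sub_pow_mul, mul_sub, Matrix.trace_sub, ← mul_assoc, ← mul_assoc,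
      Matrix.trace_mul_comm _ (Amat n), ← mul_assoc, ← pow_succ, ← pow_succ', sub_self]
  rw [Finset.sum_add_distrib, Finset.sum_const, Finset.card_range, ← Nat.cast_smul_eq_nsmul ℂ]
    at sum_eq_zero
  refine (S.smul_mem_iff (s := ((q + 1 : ℕ) : ℂ)) (Nat.cast_ne_zero.mpr q.succ_ne_zero)).mp ?_
  rw [eq_neg_of_add_eq_zero_right sum_eq_zero]
  refine neg_mem (sum_mem fun k hk => hθ k (q - k) ?_)
  have hk : k < q + 1 := Finset.mem_range.mp hk
  omega

theorem trace_sortedWord_mul_Theta_mem {S : Submodule ℂ (PolyFun n)} {p q : ℕ}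
    (hperm : ∀ w : List Bool, w.Perm (sortedWord p q) →
      (word n w * Theta n).trace - (word n (sortedWord p q) * Theta n).trace ∈ S)
    (htrAB : trAB n p q ∈ S) : (word n (sortedWord p q) * Theta n).trace ∈ S := by
  refine (add_mem_cancel_right (S.smul_mem Complex.I htrAB)).mp
    (add_smul_trAB_mem fun k l hkl => ?_)
  have hrotate : (List.replicate l false ++ sortedWord p k).Perm (sortedWord p q) :=
    perm_sortedWord (by simp [sortedWord, List.count_replicate])
      (by simp [sortedWord, List.count_replicate]; omega)
  have cyclic : (Amat n ^ p * Bmat n ^ k * Theta n * Bmat n ^ l).trace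
      = (word n (List.replicate l false ++ sortedWord p k) * Theta n).trace := by
    rw [word_append, word_replicate_false, word_sortedWord, Matrix.trace_mul_comm, ← mul_assoc]
  rw [cyclic]
  exact hperm _ hrotate

theorem trace_word_mem_filt (hn : 1 ≤ n) (w : List Bool) :
    (word n w).trace ∈ filt n w.length ∧ (word n w * Theta n).trace ∈ filt n w.length := by
  induction hd : w.length using Nat.strong_induction_on generalizing w with
  | _ d ih =>
    have hword : ∀ v : List Bool, v.length + 2 = d → (word n v).trace ∈ filt n d := fun v hv =>
      filt_mono (by omega) (ih _ (by omega) v rfl).1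
    have hTheta : ∀ v : List Bool, v.length + 2 = d → (word n v * Theta n).trace ∈ filt n d :=
      fun v hv => filt_mono (by omega) (ih _ (by omega) v rfl).2
    have hmul : ∀ u v : List Bool, u.length + v.length + 2 = d →
        (word n u * Theta n).trace * (word n v * Theta n).trace ∈ filt n d := fun u v huv =>
      filt_mono (by omega) (mul_mem_filt (ih _ (by omega) u rfl).2 (ih _ (by omega) v rfl).2)
    set p := w.count true with hp
    set q := w.count false with hq
    have hsorted : w.Perm (sortedWord p q) := perm_sortedWord rfl rfl
    have htrAB : trAB n p q ∈ filt n d := by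
      have hpq : p + q = d := by rw [hp, hq, List.count_true_add_count_false, hd]
      exact hpq ▸ trAB_mem_filt hn p q
    have hTheta_perm : ∀ v : List Bool, v.Perm (sortedWord p q) →
        (word n v * Theta n).trace - (word n (sortedWord p q) * Theta n).trace ∈ filt n d :=
      fun v hv => trace_word_mul_Theta_sub_mem_of_perm (momentMinors_le_filt d) hmul hTheta
        (by rw [hv.length_eq, ← hsorted.length_eq, hd]) hv
    constructor
    · have hsub := trace_word_sub_mem_of_perm hword hTheta hd hsorted
      rw [word_sortedWord] at hsub
      exact (Submodule.sub_mem_iff_left _ htrAB).mp hsub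
    · exact (Submodule.sub_mem_iff_left _ (trace_sortedWord_mul_Theta_mem hTheta_perm htrAB)).mp
        (hTheta_perm w hsorted)

theorem trace_word_sub_trAB_mem_filt (hn : 1 ≤ n) {w : List Bool} {p q d : ℕ}
    (hp : w.count true = p) (hq : w.count false = q) (hd : p + q ≤ d + 2) :
    (word n w).trace - trAB n p q ∈ filt n d := by
  have hlength : w.length = p + q := by rw [← hp, ← hq, List.count_true_add_count_false]
  rw [trAB, ← word_sortedWord]
  exact trace_word_sub_mem_of_perm
    (fun v hv => filt_mono (by omega) (trace_word_mem_filt hn v).1)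
    (fun v hv => filt_mono (by omega) (trace_word_mem_filt hn v).2) hlength
    (perm_sortedWord hp hq)

end Words

section LeadingTerms

theorem ham_trAB_right_zero_sub_mem_filt (hn : 1 ≤ n) {p : ℕ} (hp : 1 ≤ p) (r s : ℕ) :
    ham (trAB n p 0) (trAB n r s) - ((p : ℂ) * s) • trAB n (p + r - 1) (s - 1)
      + ((p : ℂ) * s * (n : ℂ)⁻¹) • (trAB n (p - 1) 0 * trAB n r (s - 1))
      ∈ filt n (p + r + s - 4) := by
  have sorting : ∑ i ∈ Finset.range s, ((Amat n ^ r * Bmat n ^ i * Amat n ^ (p - 1)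
      * Bmat n ^ (s - 1 - i)).trace - trAB n (p + r - 1) (s - 1)) ∈ filt n (p + r + s - 4) := by
    refine sum_mem fun i hi => ?_
    have hi : i < s := Finset.mem_range.mp hi
    have hword := trace_word_sub_trAB_mem_filt hn
      (w := sortedWord r i ++ sortedWord (p - 1) (s - 1 - i)) (p := p + r - 1) (q := s - 1)
      (d := p + r + s - 4) (by simp [sortedWord, List.count_replicate]; omega)
      (by simp [sortedWord, List.count_replicate]; omega) (by omega)
    rwa [word_append, word_sortedWord, word_sortedWord, ← mul_assoc] at hword
  convert Submodule.smul_mem _ (p : ℂ) sorting using 1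
  rw [ham_trAB_right_zero hn, Finset.sum_sub_distrib, Finset.sum_const, Finset.card_range,
    ← Nat.cast_smul_eq_nsmul ℂ]
  module

theorem ham_trAB_zero_two_add_mem_filt (hn : 1 ≤ n) (r s : ℕ) :
    ham (trAB n 0 2) (trAB n r s) + (2 * (r : ℂ)) • trAB n (r - 1) (s + 1)
      ∈ filt n (r + s - 2) := by
  have sorting : ∑ i ∈ Finset.range r, ((Amat n ^ i * Bmat n * Amat n ^ (r - 1 - i)
      * Bmat n ^ s).trace - trAB n (r - 1) (s + 1)) ∈ filt n (r + s - 2) := by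
    refine sum_mem fun i hi => ?_
    have hi : i < r := Finset.mem_range.mp hi
    have hword := trace_word_sub_trAB_mem_filt hn
      (w := sortedWord i 1 ++ sortedWord (r - 1 - i) s) (p := r - 1) (q := s + 1)
      (d := r + s - 2) (by simp [sortedWord, List.count_replicate]; omega)
      (by simp [sortedWord, List.count_replicate, add_comm]) (by omega)
    rwa [word_append, word_sortedWord, word_sortedWord, pow_one, ← mul_assoc] at hword
  convert Submodule.smul_mem _ (-2 : ℂ) sorting using 1
  rw [ham_trAB_zero_two hn, Finset.sum_sub_distrib, Finset.sum_const, Finset.card_range,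
    ← Nat.cast_smul_eq_nsmul ℂ]
  module

end LeadingTerms

section LieSpan

/-- The Lie algebra generated by a set of polynomial functions, as a linear subspace. -/
def lieSpan (S : Set (PolyFun n)) : Submodule ℂ (PolyFun n) where
  carrier := {g | LieGen n S g}
  add_mem' := LieGen.add
  zero_mem' := LieGen.zero
  smul_mem' c _ := LieGen.smul c

theorem subset_lieSpan {S : Set (PolyFun n)} : S ⊆ lieSpan S := fun _ hf => LieGen.base hf

theorem ham_mem_lieSpan {S : Set (PolyFun n)} {f g : PolyFun n} (hf : f ∈ lieSpan S)
    (hg : g ∈ lieSpan S) : ham f g ∈ lieSpan S := by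
  rw [ham_apply]
  exact LieGen.bracket hf hg

theorem lieSpan_le {S : Set (PolyFun n)} {V : Submodule ℂ (PolyFun n)} (hS : S ⊆ V)
    (hV : ∀ f ∈ V, ∀ g ∈ V, ham f g ∈ V) : lieSpan S ≤ V := by
  intro f hf
  change LieGen n S f at hf
  induction hf with
  | base hf => exact hS hf
  | zero => exact V.zero_mem
  | add _ _ hf hg => exact V.add_mem hf hg
  | smul c _ hf => exact V.smul_mem c hf
  | bracket _ _ hf hg => rw [← ham_apply]; exact hV _ hf _ hg

theorem trAB_two_zero_mem : trAB n 2 0 ∈ lieSpan (calF n) := subset_lieSpan (by simp [calF])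

theorem trAB_zero_two_mem : trAB n 0 2 ∈ lieSpan (calF n) := subset_lieSpan (by simp [calF])

theorem trAB_three_zero_mem : trAB n 3 0 ∈ lieSpan (calF n) := subset_lieSpan (by simp [calF])

theorem trAB_one_one_sq_mem : trAB n 1 1 ^ 2 ∈ lieSpan (calF n) := subset_lieSpan (by simp [calF])

theorem trAB_two_zero_mul_one_one_mem (hn : 1 ≤ n) :
    trAB n 2 0 * trAB n 1 1 ∈ lieSpan (calF n) := by
  have bracket := ham_mem_lieSpan (trAB_two_zero_mem (n := n)) trAB_one_one_sq_mem
  have bracket_eq : ham (trAB n 2 0) (trAB n 1 1 ^ 2) = (4 : ℂ) • (trAB n 2 0 * trAB n 1 1) := by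
    rw [sq, Derivation.leibniz, ham_two_zero_one_one hn, smul_eq_mul, mul_smul_comm, ← add_smul,
      mul_comm (trAB n 1 1)]
    norm_num
  rw [bracket_eq] at bracket
  exact (Submodule.smul_mem_iff _ (by norm_num)).mp bracket

theorem calF_subset_momentInvariants (hn : 1 ≤ n) : calF n ⊆ momentInvariants n := by
  have h11 : trAB n 1 1 ∈ momentInvariants n := by
    have bracket := ham_mem_momentInvariants (trAB_right_zero_mem_momentInvariants hn 2)
      (trAB_left_zero_mem_momentInvariants hn 2)
    rw [ham_two_zero_zero_two hn] at bracket
    exact ((momentInvariants n).toSubmodule.smul_mem_iff (by norm_num)).mp bracket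
  rintro _ (rfl | rfl | rfl | rfl)
  exacts [trAB_right_zero_mem_momentInvariants hn 2, trAB_left_zero_mem_momentInvariants hn 2,
    trAB_right_zero_mem_momentInvariants hn 3, pow_mem h11 2]

theorem lieSpan_calF_le_momentInvariants (hn : 1 ≤ n) :
    lieSpan (calF n) ≤ (momentInvariants n).toSubmodule :=
  lieSpan_le (calF_subset_momentInvariants hn) fun _ hf _ hg => ham_mem_momentInvariants hf hg

variable (n) in
/-- The functions agreeing with an element of the Lie algebra generated by `calF n` up to
`momentMinors`, hence on `Shat n`. -/
noncomputable def lieMod : Submodule ℂ (PolyFun n) := lieSpan (calF n) ⊔ momentMinors n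

theorem lieSpan_le_lieMod : lieSpan (calF n) ≤ lieMod n := le_sup_left

theorem momentMinors_le_lieMod : momentMinors n ≤ lieMod n := le_sup_right

theorem ham_mem_momentMinors {f g : PolyFun n} (hf : f ∈ momentInvariants n)
    (hg : g ∈ momentMinors n) : ham f g ∈ momentMinors n :=
  derivation_mem_minorsIdeal hf hg

theorem ham_mem_lieMod (hn : 1 ≤ n) {f g : PolyFun n} (hf : f ∈ lieMod n)
    (hf_inv : f ∈ momentInvariants n) (hg : g ∈ lieMod n) : ham f g ∈ lieMod n := by
  obtain ⟨g₀, hg₀, j, hj, rfl⟩ := Submodule.mem_sup.mp hg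
  rw [map_add]
  refine add_mem ?_ (momentMinors_le_lieMod (ham_mem_momentMinors hf_inv hj))
  obtain ⟨f₀, hf₀, k, hk, rfl⟩ := Submodule.mem_sup.mp hf
  rw [map_add, Derivation.add_apply, ham_antisymm k]
  exact add_mem (lieSpan_le_lieMod (ham_mem_lieSpan hf₀ hg₀)) (neg_mem (momentMinors_le_lieMod
    (ham_mem_momentMinors (lieSpan_calF_le_momentInvariants hn hg₀) hk)))

theorem ham_mem_lieMod_of_mem_lieSpan (hn : 1 ≤ n) {f g : PolyFun n}
    (hf : f ∈ lieSpan (calF n)) (hg : g ∈ lieMod n) : ham f g ∈ lieMod n :=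
  ham_mem_lieMod hn (lieSpan_le_lieMod hf) (lieSpan_calF_le_momentInvariants hn hf) hg

end LieSpan

section Constants

theorem ham_zero_two_right_zero (hn : 1 ≤ n) (r : ℕ) :
    ham (trAB n 0 2) (trAB n r 0) = (-2 * r : ℂ) • trAB n (r - 1) 1 := by
  have cyclic : ∀ i ∈ Finset.range r,
      (Amat n ^ i * Bmat n * Amat n ^ (r - 1 - i) * Bmat n ^ 0).trace = trAB n (r - 1) 1 := by
    intro i hi
    have hi : i < r := Finset.mem_range.mp hi
    rw [pow_zero, mul_one, Matrix.trace_mul_comm, ← mul_assoc, ← pow_add, trAB, pow_one,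
      show r - 1 - i + i = r - 1 by omega]
  rw [ham_trAB_zero_two hn, Finset.sum_congr rfl cyclic, Finset.sum_const, Finset.card_range,
    ← Nat.cast_smul_eq_nsmul ℂ, smul_smul]

theorem ham_zero_two_one (hn : 1 ≤ n) (s : ℕ) :
    ham (trAB n 0 2) (trAB n 1 s) = (-2 : ℂ) • trAB n 0 (s + 1) := by
  rw [ham_trAB_zero_two hn, Finset.sum_range_one, trAB, pow_zero, one_mul, mul_one, one_mul,
    ← pow_succ']

theorem ham_zero_two_two_one (hn : 1 ≤ n) :
    ham (trAB n 0 2) (trAB n 2 1) = (-4 : ℂ) • trAB n 1 2 := by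
  have cyclic : (Bmat n * Amat n * Bmat n).trace = trAB n 1 2 := by
    rw [trAB, pow_one, sq, mul_assoc, Matrix.trace_mul_comm, mul_assoc]
  rw [ham_trAB_zero_two hn, Finset.sum_range_succ, Finset.sum_range_one]
  simp only [pow_zero, pow_one, one_mul, mul_one, Nat.add_one_sub_one, Nat.sub_zero,
    Nat.sub_self, cyclic]
  rw [mul_assoc, ← sq, ← pow_one (Amat n), ← trAB]
  module

theorem ham_zero_two_three_one (hn : 1 ≤ n) : ham (trAB n 0 2) (trAB n 3 1)
    = (-2 : ℂ) • ((2 : ℂ) • trAB n 2 2 + ((Amat n * Bmat n) ^ 2).trace) := by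
  have cyclic : (Bmat n * Amat n ^ 2 * Bmat n).trace = trAB n 2 2 := by
    rw [trAB, sq (Bmat n), mul_assoc, Matrix.trace_mul_comm, mul_assoc]
  rw [ham_trAB_zero_two hn, Finset.sum_range_succ, Finset.sum_range_succ, Finset.sum_range_one]
  simp only [pow_zero, pow_one, one_mul, mul_one, Nat.reduceSub, Nat.sub_zero, cyclic]
  rw [mul_assoc (Amat n ^ 2), ← sq (Bmat n), ← trAB, mul_assoc (_ * _), ← sq (_ * _)]
  module

theorem ham_three_zero_two_one (hn : 1 ≤ n) : ham (trAB n 3 0) (trAB n 2 1)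
    = (3 : ℂ) • (trAB n 4 0 - (n : ℂ)⁻¹ • trAB n 2 0 ^ 2) := by
  rw [ham_trAB_right_zero_one hn, Nat.cast_ofNat, sq (trAB n 2 0)]

theorem ham_three_zero_zero_three (hn : 1 ≤ n) : ham (trAB n 3 0) (trAB n 0 3)
    = (9 : ℂ) • (trAB n 2 2 - (n : ℂ)⁻¹ • (trAB n 2 0 * trAB n 0 2)) := by
  have cyclic : ∀ i ∈ Finset.range 3,
      (Amat n ^ 0 * Bmat n ^ i * Amat n ^ (3 - 1) * Bmat n ^ (3 - 1 - i)).trace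
        = trAB n 2 2 := by
    intro i hi
    have hi : i < 3 := Finset.mem_range.mp hi
    rw [pow_zero, one_mul, mul_assoc, Matrix.trace_mul_comm, mul_assoc, ← pow_add,
      show 3 - 1 - i + i = 2 by omega, trAB]
  rw [ham_trAB_right_zero hn, Finset.sum_congr rfl cyclic, Finset.sum_const, Finset.card_range,
    ← Nat.cast_smul_eq_nsmul ℂ]
  module

theorem trAB_two_zero_mul_zero_two_mem (hn : 1 ≤ n) :
    trAB n 2 0 * trAB n 0 2 ∈ lieSpan (calF n) := by
  have bracket := ham_mem_lieSpan trAB_zero_two_mem (trAB_two_zero_mul_one_one_mem hn)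
  have bracket_eq : ham (trAB n 0 2) (trAB n 2 0 * trAB n 1 1)
      = (-2 : ℂ) • (trAB n 2 0 * trAB n 0 2) - (4 : ℂ) • trAB n 1 1 ^ 2 := by
    rw [Derivation.leibniz, ham_zero_two_right_zero hn, ham_zero_two_one hn, smul_eq_mul,
      smul_eq_mul, mul_smul_comm, mul_smul_comm, ← sq]
    push_cast
    module
  rw [bracket_eq, Submodule.sub_mem_iff_left _ (Submodule.smul_mem _ _ trAB_one_one_sq_mem)]
    at bracket
  exact (Submodule.smul_mem_iff _ (by norm_num)).mp bracket

theorem trAB_two_one_mem (hn : 1 ≤ n) : trAB n 2 1 ∈ lieSpan (calF n) := by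
  have bracket := ham_mem_lieSpan (trAB_zero_two_mem (n := n)) trAB_three_zero_mem
  rw [ham_zero_two_right_zero hn] at bracket
  exact (Submodule.smul_mem_iff _ (by norm_num)).mp bracket

theorem trAB_zero_three_mem (hn : 1 ≤ n) : trAB n 0 3 ∈ lieSpan (calF n) := by
  have bracket := ham_mem_lieSpan trAB_zero_two_mem
    (ham_mem_lieSpan trAB_zero_two_mem (trAB_two_one_mem hn))
  rw [ham_zero_two_two_one hn, Derivation.map_smul, ham_zero_two_one hn, smul_smul] at bracket
  exact (Submodule.smul_mem_iff _ (by norm_num)).mp bracket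

theorem trAB_two_two_mem (hn : 1 ≤ n) : trAB n 2 2 ∈ lieSpan (calF n) := by
  have bracket := ham_mem_lieSpan trAB_three_zero_mem (trAB_zero_three_mem hn)
  rw [ham_three_zero_zero_three hn, Submodule.smul_mem_iff _ (by norm_num)] at bracket
  exact (Submodule.sub_mem_iff_left _
    (Submodule.smul_mem _ _ (trAB_two_zero_mul_zero_two_mem hn))).mp bracket

theorem trace_Amat_mul_Bmat_sq_mem (hn : 1 ≤ n) :
    ((Amat n * Bmat n) ^ 2).trace ∈ lieSpan (calF n) := by
  have bracket := ham_mem_lieSpan trAB_three_zero_mem (trAB_two_one_mem hn)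
  rw [ham_three_zero_two_one hn, Submodule.smul_mem_iff _ (by norm_num)] at bracket
  have double := ham_mem_lieSpan trAB_zero_two_mem (ham_mem_lieSpan trAB_zero_two_mem bracket)
  have double_eq :
      ham (trAB n 0 2) (ham (trAB n 0 2) (trAB n 4 0 - (n : ℂ)⁻¹ • trAB n 2 0 ^ 2))
      = (16 : ℂ) • ((Amat n * Bmat n) ^ 2).trace + ((32 : ℂ) • trAB n 2 2
        - (n : ℂ)⁻¹ • ((32 : ℂ) • trAB n 1 1 ^ 2 + (16 : ℂ) • (trAB n 2 0 * trAB n 0 2))) := by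
    simp only [map_sub, Derivation.map_smul, sq (trAB n 2 0), Derivation.leibniz, smul_eq_mul,
      map_add, ham_zero_two_right_zero hn, ham_zero_two_three_one hn, ham_zero_two_one hn,
      Nat.reduceSub, Nat.reduceAdd, mul_smul_comm, sq (trAB n 1 1)]
    push_cast
    module
  rw [double_eq, Submodule.add_mem_iff_left] at double
  · exact (Submodule.smul_mem_iff _ (by norm_num)).mp double
  · exact sub_mem (Submodule.smul_mem _ _ (trAB_two_two_mem hn)) (Submodule.smul_mem _ _
      (add_mem (Submodule.smul_mem _ _ trAB_one_one_sq_mem)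
        (Submodule.smul_mem _ _ (trAB_two_zero_mul_zero_two_mem hn))))

theorem C_I_mul_C_I : (C Complex.I : PolyFun n) * C Complex.I = -1 := by
  rw [← C_mul, Complex.I_mul_I, C_neg, C_1]

theorem trace_Theta : (Theta n).trace = -((n : PolyFun n) * C Complex.I) := by
  rw [Theta, Matrix.trace_sub, Matrix.trace_sub, Matrix.trace_mul_comm, sub_self, zero_sub,
    Matrix.trace_smul, Matrix.trace_one, Fintype.card_fin, smul_eq_mul, mul_comm]

theorem trace_Theta_sq :
    (Theta n * Theta n).trace = 2 * ((Amat n * Bmat n) ^ 2).trace - 2 * trAB n 2 2 - n := by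
  have cyclic_ABBA : (Amat n * Bmat n * (Bmat n * Amat n)).trace = trAB n 2 2 := by
    rw [trAB, ← mul_assoc, Matrix.trace_mul_comm, sq, sq]
    simp only [mul_assoc]
  have cyclic_BAAB : (Bmat n * Amat n * (Amat n * Bmat n)).trace = trAB n 2 2 := by
    rw [Matrix.trace_mul_comm, cyclic_ABBA]
  have cyclic_BABA : ((Bmat n * Amat n) ^ 2).trace = ((Amat n * Bmat n) ^ 2).trace := by
    rw [sq, sq, mul_assoc, Matrix.trace_mul_comm]
    simp only [mul_assoc]
  simp only [Theta, sub_mul, mul_sub, Matrix.trace_sub, Matrix.smul_mul, Matrix.mul_smul, one_mul,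
    mul_one, Matrix.trace_smul, Matrix.trace_one, Fintype.card_fin, smul_eq_mul, ← sq (_ * _),
    cyclic_ABBA, cyclic_BAAB, cyclic_BABA, Matrix.trace_mul_comm (Bmat n) (Amat n)]
  linear_combination (n : PolyFun n) * C_I_mul_C_I

-- Rank one of the moment matrix forces `tr Θ² = (tr Θ)²`, which expresses the constant `n - n²`
-- through `tr ABAB - tr A²B²`.
theorem one_mem_lieMod (hn : 2 ≤ n) : (1 : PolyFun n) ∈ lieMod n := by
  have minors : (Theta n * Theta n).trace - (Theta n).trace * (Theta n).trace
      ∈ lieMod n := by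
    simpa only [one_mul, mul_one] using momentMinors_le_lieMod
      (trace_mul_mul_mul_sub_mem_minorsIdeal 1 (Theta n) 1)
  have lie : (2 : ℂ) • (((Amat n * Bmat n) ^ 2).trace - trAB n 2 2) ∈ lieMod n :=
    lieSpan_le_lieMod (Submodule.smul_mem _ _ (sub_mem
      (trace_Amat_mul_Bmat_sq_mem (by omega)) (trAB_two_two_mem (by omega))))
  have const_eq : (n * (n - 1) : ℂ) • (1 : PolyFun n)
      = ((Theta n * Theta n).trace - (Theta n).trace * (Theta n).trace)
        - (2 : ℂ) • (((Amat n * Bmat n) ^ 2).trace - trAB n 2 2) := by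
    rw [trace_Theta, trace_Theta_sq]
    simp only [MvPolynomial.smul_eq_C_mul, C_mul, C_sub, C_1, map_natCast, map_ofNat]
    linear_combination (n : PolyFun n) ^ 2 * C_I_mul_C_I
  have hn_ne : (n * (n - 1) : ℂ) ≠ 0 := by
    refine mul_ne_zero (by exact_mod_cast (by omega : n ≠ 0)) (sub_ne_zero.mpr ?_)
    exact_mod_cast (by omega : n ≠ 1)
  refine (Submodule.smul_mem_iff _ hn_ne).mp ?_
  rw [const_eq]
  exact sub_mem minors lie

end Constants

section ProductBrackets

variable (n) in
/-- The span of the reduced products of `l` traces of degree at most `d + 1`, modulo `filt n d`. -/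
noncomputable def topSpan (l d : ℕ) : Submodule ℂ (PolyFun n) :=
  Submodule.span ℂ {f | ∃ s, Reduced s ∧ s.length = l ∧ deg s ≤ d + 1 ∧ trProd n s = f} ⊔ filt n d

theorem topSpan_le {l d : ℕ} {S : Submodule ℂ (PolyFun n)} (hfilt : filt n d ≤ S)
    (hprod : ∀ s, Reduced s → s.length = l → deg s ≤ d + 1 → trProd n s ∈ S) :
    topSpan n l d ≤ S := by
  refine sup_le (Submodule.span_le.mpr ?_) hfilt
  rintro _ ⟨s, hs, hl, hd, rfl⟩
  exact hprod s hs hl hd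

theorem filt_le_topSpan (l d : ℕ) : filt n d ≤ topSpan n l d := le_sup_right

theorem trProd_mem_topSpan {s : List (ℕ × ℕ)} (hs : Reduced s) {d : ℕ} (hd : deg s ≤ d + 1) :
    trProd n s ∈ topSpan n s.length d :=
  Submodule.mem_sup_left (Submodule.subset_span ⟨s, hs, rfl, hd, rfl⟩)

theorem trAB_mem_topSpan {p q d : ℕ} (h : 2 ≤ p + q) (hd : p + q ≤ d + 1) :
    trAB n p q ∈ topSpan n 1 d := by
  rw [← mul_one (trAB n p q)]
  exact trProd_mem_topSpan (s := [(p, q)]) (reduced_singleton h) hd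

theorem trProd_mul_mem_topSpan {f : PolyFun n} {l d e : ℕ} (hf : f ∈ topSpan n l d)
    {s : List (ℕ × ℕ)} (hs : Reduced s) (he : deg s + d ≤ e) :
    trProd n s * f ∈ topSpan n (s.length + l) e := by
  suffices h : topSpan n l d
      ≤ (topSpan n (s.length + l) e).comap (LinearMap.mulLeft ℂ (trProd n s)) from h hf
  refine topSpan_le (fun g hg => ?_) fun t ht hl hd => ?_
  · exact filt_le_topSpan _ _ (filt_mono he (mul_mem_filt (trProd_mem_filt hs le_rfl) hg))
  · rw [Submodule.mem_comap, LinearMap.mulLeft_apply, ← trProd_append, ← hl, ← List.length_append]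
    exact trProd_mem_topSpan (hs.append ht) (by rw [deg_append]; omega)

theorem trAB_mul_mem_topSpan {f : PolyFun n} {l d e p q : ℕ} (hf : f ∈ topSpan n l d)
    (hpq : 2 ≤ p + q) (he : p + q + d ≤ e) : trAB n p q * f ∈ topSpan n (l + 1) e := by
  rw [← mul_one (trAB n p q), add_comm l]
  exact trProd_mul_mem_topSpan (s := [(p, q)]) hf (reduced_singleton hpq) he

theorem ham_trAB_zero_two_mem_topSpan (hn : 1 ≤ n) {r s : ℕ} (h : 2 ≤ r + s) :
    ham (trAB n 0 2) (trAB n r s) ∈ topSpan n 1 (r + s - 1) := by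
  have leading : (2 * (r : ℂ)) • trAB n (r - 1) (s + 1) ∈ topSpan n 1 (r + s - 1) := by
    rcases Nat.eq_zero_or_pos r with rfl | hr
    · rw [Nat.cast_zero, mul_zero, zero_smul]
      exact zero_mem _
    · exact Submodule.smul_mem _ _ (trAB_mem_topSpan (by omega) (by omega))
  exact (add_mem_cancel_right leading).mp (filt_le_topSpan 1 _
    (filt_mono (by omega) (ham_trAB_zero_two_add_mem_filt hn r s)))

theorem ham_trProd_mem_topSpan (hn : 1 ≤ n) {s : List (ℕ × ℕ)} (hs : Reduced s) :
    ham (trAB n 0 2) (trProd n s) ∈ topSpan n s.length (deg s - 1) := by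
  induction s with
  | nil => rw [trProd_nil, Derivation.map_one_eq_zero]; exact zero_mem _
  | cons t l ih =>
    obtain ⟨ht, hl⟩ := reduced_cons.mp hs
    rw [trProd_cons, Derivation.leibniz, smul_eq_mul, smul_eq_mul, List.length_cons, deg_cons]
    refine add_mem ?_ (trProd_mul_mem_topSpan (ham_trAB_zero_two_mem_topSpan hn ht) hl (by omega))
    rcases l with _ | ⟨u, l⟩
    · rw [trProd_nil, Derivation.map_one_eq_zero, mul_zero]
      exact zero_mem _
    · have hu := (reduced_cons.mp hl).1
      exact trAB_mul_mem_topSpan (ih hl) ht (by rw [deg_cons]; omega)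

variable (n) in
/-- The derivative of `trProd n s` along the translations of `B` by scalar matrices. -/
noncomputable def translB : List (ℕ × ℕ) → PolyFun n
  | [] => 0
  | t :: l => (t.2 : ℂ) • (trAB n t.1 (t.2 - 1) * trProd n l) + trAB n t.1 t.2 * translB l

/-- The degree of `trProd n s` in the entries of `B`. -/
def bdeg (s : List (ℕ × ℕ)) : ℕ := (s.map Prod.snd).sum

theorem bdeg_cons (t : ℕ × ℕ) (s : List (ℕ × ℕ)) : bdeg (t :: s) = t.2 + bdeg s := rfl

theorem translB_mem_span (hn : 1 ≤ n) {s : List (ℕ × ℕ)} (hs : Reduced s) :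
    translB n s ∈ Submodule.span ℂ {f | ∃ s', Reduced s' ∧ s'.length = s.length ∧
      deg s' + 1 = deg s ∧ bdeg s' + 1 = bdeg s ∧ trProd n s' = f} := by
  induction s with
  | nil => exact zero_mem _
  | cons t l ih =>
    obtain ⟨ht, hl⟩ := reduced_cons.mp hs
    simp only [translB, List.length_cons, deg_cons, bdeg_cons]
    refine add_mem ?_ ?_
    · rcases Nat.eq_zero_or_pos t.2 with ht₂ | ht₂
      · rw [ht₂, Nat.cast_zero, zero_smul]
        exact zero_mem _
      refine Submodule.smul_mem _ _ ?_
      rcases eq_or_ne (t.1 + t.2) 2 with ht_eq | ht_ne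
      · rw [trAB_eq_zero hn (by omega), zero_mul]
        exact zero_mem _
      · refine Submodule.subset_span ⟨(t.1, t.2 - 1) :: l, reduced_cons.mpr ⟨?_, hl⟩, rfl, ?_, ?_,
          rfl⟩ <;> simp only [deg_cons, bdeg_cons] <;> omega
    · suffices h : Submodule.span ℂ _ ≤ (Submodule.span ℂ _).comap
          (LinearMap.mulLeft ℂ (trAB n t.1 t.2)) from h (ih hl)
      refine Submodule.span_le.mpr ?_
      rintro _ ⟨s', hs', hlength, hdeg, hbdeg, rfl⟩
      exact Submodule.subset_span ⟨t :: s', reduced_cons.mpr ⟨ht, hs'⟩, by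
        rw [List.length_cons, hlength], by rw [deg_cons]; omega, by rw [bdeg_cons]; omega, rfl⟩

theorem ham_trAB_right_zero_mem_topSpan (hn : 1 ≤ n) {p r s : ℕ} (hp : 2 ≤ p) (h : 2 ≤ r + s) :
    ham (trAB n (p + 1) 0) (trAB n r s)
      + (((p + 1 : ℕ) : ℂ) * (n : ℂ)⁻¹) • (trAB n p 0 * ((s : ℂ) • trAB n r (s - 1)))
      ∈ topSpan n 1 (r + s + (p - 2)) := by
  have lower := filt_le_topSpan 1 _ (filt_mono (by omega : _ ≤ r + s + (p - 2))
    (ham_trAB_right_zero_sub_mem_filt hn (by omega : 1 ≤ p + 1) r s))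
  have leading : (((p + 1 : ℕ) : ℂ) * s) • trAB n (p + 1 + r - 1) (s - 1)
      ∈ topSpan n 1 (r + s + (p - 2)) := by
    rcases Nat.eq_zero_or_pos s with rfl | hs
    · rw [Nat.cast_zero, mul_zero, zero_smul]
      exact zero_mem _
    · exact Submodule.smul_mem _ _ (trAB_mem_topSpan (by omega) (by omega))
  convert add_mem leading lower using 1
  rw [Nat.add_sub_cancel, mul_smul_comm]
  module

theorem ham_trProd_add_mem_topSpan (hn : 1 ≤ n) {p : ℕ} (hp : 2 ≤ p) {s : List (ℕ × ℕ)}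
    (hs : Reduced s) : ham (trAB n (p + 1) 0) (trProd n s)
      + (((p + 1 : ℕ) : ℂ) * (n : ℂ)⁻¹) • (trAB n p 0 * translB n s)
      ∈ topSpan n s.length (deg s + (p - 2)) := by
  induction s with
  | nil =>
    rw [trProd_nil, Derivation.map_one_eq_zero, translB, mul_zero, smul_zero, add_zero]
    exact zero_mem _
  | cons t l ih =>
    obtain ⟨ht, hl⟩ := reduced_cons.mp hs
    have tail := trAB_mul_mem_topSpan (e := deg (t :: l) + (p - 2)) (ih hl) ht
      (by rw [deg_cons]; omega)
    have head := trProd_mul_mem_topSpan (e := deg (t :: l) + (p - 2))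
      (ham_trAB_right_zero_mem_topSpan hn hp ht) hl (by rw [deg_cons]; omega)
    rw [List.length_cons]
    convert add_mem tail head using 1
    rw [trProd_cons, translB, Derivation.leibniz]
    simp only [MvPolynomial.smul_eq_C_mul, smul_eq_mul]
    ring

end ProductBrackets

section Generation

theorem trAB_two_zero_pow_mem (hn : 2 ≤ n) (k : ℕ) : trAB n 2 0 ^ k ∈ lieMod n := by
  have hn₁ : 1 ≤ n := by omega
  induction k with
  | zero => rw [pow_zero]; exact one_mem_lieMod hn
  | succ k ih =>
    rcases Nat.eq_zero_or_pos k with rfl | hk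
    · rw [zero_add, pow_one]
      exact lieSpan_le_lieMod trAB_two_zero_mem
    have bracket := ham_mem_lieMod_of_mem_lieSpan hn₁ (trAB_two_zero_mul_one_one_mem hn₁) ih
    have bracket_eq : ham (trAB n 2 0 * trAB n 1 1) (trAB n 2 0 ^ k)
        = (-2 * k : ℂ) • trAB n 2 0 ^ (k + 1) := by
      obtain ⟨m, rfl⟩ := Nat.exists_eq_add_of_le' hk
      rw [Derivation.leibniz_pow, ham_mul_apply, ham_antisymm (trAB n 1 1),
        ham_two_zero_one_one hn₁, ham_trAB_right_zero_right_zero hn₁, Nat.add_sub_cancel,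
        ← Nat.cast_smul_eq_nsmul ℂ, mul_zero, add_zero]
      simp only [MvPolynomial.smul_eq_C_mul, smul_eq_mul, C_mul, C_neg, map_ofNat]
      ring
    rw [bracket_eq] at bracket
    refine (Submodule.smul_mem_iff _ (mul_ne_zero (by norm_num) ?_)).mp bracket
    exact_mod_cast hk.ne'

theorem ham_three_zero_pow_mul (hn : 1 ≤ n) (r k : ℕ) :
    ham (trAB n 3 0) (trAB n 2 0 ^ k * trAB n r 1) =
      (3 : ℂ) • (trAB n 2 0 ^ k * trAB n (r + 2) 0)
      - (3 * (n : ℂ)⁻¹) • (trAB n 2 0 ^ (k + 1) * trAB n r 0) := by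
  rw [Derivation.leibniz, Derivation.leibniz_pow, ham_trAB_right_zero_right_zero hn,
    ham_trAB_right_zero_one hn, smul_zero, smul_zero, smul_zero, add_zero]
  simp only [MvPolynomial.smul_eq_C_mul, smul_eq_mul, C_mul, Nat.cast_ofNat, Nat.reduceSub]
  ring

variable {N : ℕ}

theorem pow_mul_trAB_mem (hn : 2 ≤ n) (hlow : ∀ d < N, filt n d ≤ lieMod n) (j k : ℕ)
    (hN : 2 * k + j ≤ N) : trAB n 2 0 ^ k * trAB n j 0 ∈ lieMod n := by
  have hn₁ : 1 ≤ n := by omega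
  induction j using Nat.strong_induction_on generalizing k with
  | _ j ih =>
    obtain _ | _ | _ | j := j
    · rw [trAB_zero_zero, mul_smul_comm, mul_one]
      exact Submodule.smul_mem _ _ (trAB_two_zero_pow_mem hn k)
    · rw [trAB_eq_zero hn₁ (p := 0 + 1) (q := 0) rfl, mul_zero]
      exact zero_mem _
    · rw [← pow_succ]
      exact trAB_two_zero_pow_mem hn (k + 1)
    · have lower : trAB n 2 0 ^ k * trAB n (j + 1) 1 ∈ lieMod n :=
        hlow (k * 2 + (j + 2)) (by omega)
          (mul_mem_filt (pow_mem_filt (trAB_mem_filt hn₁ 2 0) k) (trAB_mem_filt hn₁ (j + 1) 1))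
      have bracket := ham_mem_lieMod_of_mem_lieSpan hn₁ trAB_three_zero_mem lower
      have shorter := ih (j + 1) (by omega) (k + 1) (by omega)
      rw [ham_three_zero_pow_mul hn₁,
        Submodule.sub_mem_iff_left _ (Submodule.smul_mem _ _ shorter)] at bracket
      exact (Submodule.smul_mem_iff _ (by norm_num)).mp bracket

theorem trAB_mem_lieMod (hn : 2 ≤ n) (hlow : ∀ d < N, filt n d ≤ lieMod n) {p q : ℕ}
    (hN : p + q ≤ N) : trAB n p q ∈ lieMod n := by
  have hn₁ : 1 ≤ n := by omega
  induction q generalizing p with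
  | zero =>
    rw [← one_mul (trAB n p 0), ← pow_zero (trAB n 2 0)]
    exact pow_mul_trAB_mem hn hlow p 0 (by omega)
  | succ q ih =>
    have bracket := ham_mem_lieMod_of_mem_lieSpan hn₁ trAB_zero_two_mem
      (ih (p := p + 1) (by omega))
    have lower := hlow _ (by omega) (ham_trAB_zero_two_add_mem_filt hn₁ (p + 1) q)
    refine (Submodule.smul_mem_iff _ ?_).mp ((Submodule.add_mem_iff_right _ bracket).mp lower)
    exact_mod_cast (by omega : 2 * (p + 1) ≠ 0)

-- Up to lower degree, `{tr A ^ (p + 1), trProd n s}` is a multiple of `tr A ^ p * translB n s` plus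
-- products that have `R` factors again.
theorem trAB_mul_translB_mem (hn : 2 ≤ n) (hlow : ∀ d < N, filt n d ≤ lieMod n) {R : ℕ}
    (hR : ∀ s, Reduced s → s.length = R → deg s ≤ N → trProd n s ∈ lieMod n)
    {p : ℕ} (hp : 2 ≤ p) (hpN : p + 1 ≤ N) {s : List (ℕ × ℕ)} (hs : Reduced s)
    (hl : s.length = R) (hN : p + deg s ≤ N + 1) : trAB n p 0 * translB n s ∈ lieMod n := by
  have hn₁ : 1 ≤ n := by omega
  have bracket : ham (trAB n (p + 1) 0) (trProd n s) ∈ lieMod n :=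
    ham_mem_lieMod hn₁ (trAB_mem_lieMod hn hlow hpN)
      (trAB_right_zero_mem_momentInvariants hn₁ _) (hR s hs hl (by omega))
  have top : topSpan n s.length (deg s + (p - 2)) ≤ lieMod n :=
    topSpan_le (hlow _ (by omega)) fun t ht htl htd => hR t ht (htl.trans hl) (by omega)
  have coeff_ne_zero : ((p + 1 : ℕ) : ℂ) * (n : ℂ)⁻¹ ≠ 0 :=
    mul_ne_zero (Nat.cast_ne_zero.mpr p.succ_ne_zero)
      (inv_ne_zero (Nat.cast_ne_zero.mpr (by omega)))
  exact (Submodule.smul_mem_iff _ coeff_ne_zero).mp ((Submodule.add_mem_iff_right _ bracket).mp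
    (top (ham_trProd_add_mem_topSpan hn₁ hp hs)))

theorem trProd_cons_right_zero_mem (hn : 2 ≤ n) (hlow : ∀ d < N, filt n d ≤ lieMod n) {R : ℕ}
    (hR : ∀ s, Reduced s → s.length = R → deg s ≤ N → trProd n s ∈ lieMod n)
    {p : ℕ} {u : ℕ × ℕ} {l : List (ℕ × ℕ)} (hs : Reduced ((p, 0) :: u :: l))
    (hl : l.length + 1 = R) (hN : deg ((p, 0) :: u :: l) ≤ N) :
    trProd n ((p, 0) :: u :: l) ∈ lieMod n := by
  induction hb : bdeg l using Nat.strong_induction_on generalizing u l with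
  | _ b ih =>
    obtain ⟨r, s⟩ := u
    simp only [reduced_cons, deg_cons] at hs hN
    obtain ⟨hp, hu, hl_reduced⟩ := hs
    have total : trAB n p 0 * translB n ((r, s + 1) :: l) ∈ lieMod n :=
      trAB_mul_translB_mem hn hlow hR hp (by omega)
        (reduced_cons.mpr ⟨by omega, hl_reduced⟩) hl (by rw [deg_cons]; omega)
    have tail : trAB n p 0 * (trAB n r (s + 1) * translB n l) ∈ lieMod n := by
      rw [← mul_assoc]
      suffices h : Submodule.span ℂ _ ≤ (lieMod n).comap (LinearMap.mulLeft ℂ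
        (trAB n p 0 * trAB n r (s + 1))) from h (translB_mem_span (by omega) hl_reduced)
      refine Submodule.span_le.mpr ?_
      rintro _ ⟨l', hl', hlength, hdeg, hbdeg, rfl⟩
      have shorter := ih (bdeg l') (by omega) (u := (r, s + 1)) (l := l')
        (by simp only [reduced_cons]; exact ⟨hp, by omega, hl'⟩) (by omega)
        (by simp only [deg_cons]; omega) rfl
      rwa [trProd_cons, trProd_cons, ← mul_assoc] at shorter
    rw [translB, mul_add, Submodule.add_mem_iff_left _ tail, mul_smul_comm] at total
    exact (Submodule.smul_mem_iff _ (Nat.cast_ne_zero.mpr s.succ_ne_zero)).mp total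

theorem trAB_mul_ham_trProd_mem (hn : 1 ≤ n) (hlow : ∀ d < N, filt n d ≤ lieMod n)
    {p q : ℕ} {s : List (ℕ × ℕ)} (hs : Reduced s) (hdeg : 1 ≤ deg s) (hN : p + q + deg s ≤ N)
    (ih : ∀ t, Reduced t → t.length = s.length → deg t ≤ deg s →
      trAB n p q * trProd n t ∈ lieMod n) :
    trAB n p q * ham (trAB n 0 2) (trProd n s) ∈ lieMod n := by
  suffices h : topSpan n s.length (deg s - 1) ≤ (lieMod n).comap
    (LinearMap.mulLeft ℂ (trAB n p q)) from h (ham_trProd_mem_topSpan hn hs)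
  refine topSpan_le (fun f hf => ?_) fun t ht htl htd => ih t ht htl (by omega)
  exact hlow (p + q + (deg s - 1)) (by omega) (mul_mem_filt (trAB_mem_filt hn _ _) hf)

theorem trProd_cons_mem (hn : 2 ≤ n) (hlow : ∀ d < N, filt n d ≤ lieMod n) {R : ℕ}
    (hR₀ : 1 ≤ R) (hR : ∀ s, Reduced s → s.length = R → deg s ≤ N → trProd n s ∈ lieMod n)
    {p q : ℕ} {s : List (ℕ × ℕ)} (hs : Reduced ((p, q) :: s)) (hl : s.length = R)
    (hN : deg ((p, q) :: s) ≤ N) : trProd n ((p, q) :: s) ∈ lieMod n := by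
  have hn₁ : 1 ≤ n := by omega
  obtain ⟨u, l, rfl⟩ := List.exists_cons_of_length_pos (hR₀.trans_eq hl.symm)
  induction q generalizing p u l with
  | zero => exact trProd_cons_right_zero_mem hn hlow hR hs hl hN
  | succ q ih =>
    obtain ⟨hpq, hs⟩ := reduced_cons.mp hs
    rw [deg_cons] at hN
    have hdeg : 1 ≤ deg (u :: l) := by
      have hu := (reduced_cons.mp hs).1
      rw [deg_cons]
      omega
    have ih : ∀ t, Reduced t → t.length = (u :: l).length → deg t ≤ deg (u :: l) →
        trAB n (p + 1) q * trProd n t ∈ lieMod n := by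
      intro t ht htl htd
      obtain ⟨v, t, rfl⟩ := List.exists_cons_of_length_eq_add_one htl
      refine ih (p := p + 1) v t (reduced_cons.mpr ⟨by omega, ht⟩) (htl.trans hl) ?_
      rw [deg_cons]
      omega
    have bracket := ham_mem_lieMod_of_mem_lieSpan hn₁ trAB_zero_two_mem (ih _ hs rfl le_rfl)
    rw [Derivation.leibniz, smul_eq_mul, smul_eq_mul, Submodule.add_mem_iff_right _
      (trAB_mul_ham_trProd_mem hn₁ hlow hs hdeg (by omega) ih)] at bracket
    have lower := hlow _ (by omega) (mul_mem_filt (trProd_mem_filt hs le_rfl)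
      (ham_trAB_zero_two_add_mem_filt hn₁ (p + 1) q))
    rw [mul_add, Submodule.add_mem_iff_right _ bracket, mul_smul_comm,
      mul_comm (trProd n _)] at lower
    refine (Submodule.smul_mem_iff _ ?_).mp lower
    exact_mod_cast (by omega : 2 * (p + 1) ≠ 0)

theorem trProd_mem_lieMod_of_low (hn : 2 ≤ n) (hlow : ∀ d < N, filt n d ≤ lieMod n)
    {s : List (ℕ × ℕ)} (hs : Reduced s) (hN : deg s ≤ N) : trProd n s ∈ lieMod n := by
  induction hl : s.length generalizing s with
  | zero =>
    rw [List.length_eq_zero_iff.mp hl, trProd_nil]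
    exact one_mem_lieMod hn
  | succ R ih =>
    obtain ⟨⟨p, q⟩, s, rfl⟩ := List.exists_cons_of_length_eq_add_one hl
    rw [List.length_cons, Nat.add_right_cancel_iff] at hl
    rcases Nat.eq_zero_or_pos R with rfl | hR
    · obtain rfl := List.length_eq_zero_iff.mp hl
      rw [trProd_cons, trProd_nil, mul_one]
      exact trAB_mem_lieMod hn hlow hN
    · exact trProd_cons_mem hn hlow hR (fun _ ht htl htd => ih ht htd htl) hs hl hN

theorem filt_le_lieMod (hn : 2 ≤ n) (N : ℕ) : filt n N ≤ lieMod n := by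
  induction N using Nat.strong_induction_on with
  | _ N ih => exact filt_le momentMinors_le_lieMod fun _ => trProd_mem_lieMod_of_low hn ih

end Generation

section Evaluation

/-- The evaluation `evalP` at a pair of matrices, as a ring homomorphism. -/
noncomputable def evalHom (P : Matrix (Fin n) (Fin n) ℂ × Matrix (Fin n) (Fin n) ℂ) :
    PolyFun n →+* ℂ :=
  MvPolynomial.eval (Sum.elim (fun p => P.1 p.1 p.2) (fun p => P.2 p.1 p.2))

variable {P : Matrix (Fin n) (Fin n) ℂ × Matrix (Fin n) (Fin n) ℂ}

theorem evalP_eq_evalHom (f : PolyFun n) : evalP P.1 P.2 f = evalHom P f := rfl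

theorem map_evalHom_Xmat : (Xmat n).map (evalHom P) = P.1 := by
  ext; simp [Xmat, evalHom]

theorem map_evalHom_Ymat : (Ymat n).map (evalHom P) = P.2 := by
  ext; simp [Ymat, evalHom]

theorem map_evalHom_Amat (hP : P.1.trace = 0) : (Amat n).map (evalHom P) = P.1 := by
  rw [Amat, Matrix.map_sub _ (map_sub _), smul_one_map, map_mul, AddMonoidHom.map_trace,
    map_evalHom_Xmat, hP, mul_zero, zero_smul, sub_zero]

theorem map_evalHom_Bmat (hP : P.2.trace = 0) : (Bmat n).map (evalHom P) = P.2 := by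
  rw [Bmat, Matrix.map_sub _ (map_sub _), smul_one_map, map_mul, AddMonoidHom.map_trace,
    map_evalHom_Ymat, hP, mul_zero, zero_smul, sub_zero]

theorem map_evalHom_Theta (hA : P.1.trace = 0) (hB : P.2.trace = 0) :
    (Theta n).map (evalHom P) = P.1 * P.2 - P.2 * P.1 - Complex.I • 1 := by
  rw [Theta, Matrix.map_sub _ (map_sub _), Matrix.map_sub _ (map_sub _), Matrix.map_mul,
    Matrix.map_mul, map_evalHom_Amat hA, map_evalHom_Bmat hB, smul_one_map, evalHom, eval_C]

theorem evalP_eq_zero_of_mem_momentMinors (hP : P ∈ Shat n) {f : PolyFun n}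
    (hf : f ∈ momentMinors n) : evalP P.1 P.2 f = 0 := by
  obtain ⟨hA, hB, hrank⟩ := hP
  rw [← map_evalHom_Theta hA hB] at hrank
  rw [evalP_eq_evalHom, ← RingHom.mem_ker]
  exact minorsIdeal_le_ker_of_rank_map_le_one hrank.le hf

theorem exists_lieGen_of_mem_filt (hn : 2 ≤ n) {f : PolyFun n} {d : ℕ} (hf : f ∈ filt n d) :
    ∃ g, LieGen n (calF n) g ∧ ∀ P ∈ Shat n, evalP P.1 P.2 f = evalP P.1 P.2 g := by
  obtain ⟨g, hg, j, hj, rfl⟩ := Submodule.mem_sup.mp (filt_le_lieMod hn d hf)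
  refine ⟨g, hg, fun P hP => ?_⟩
  rw [evalP_eq_evalHom, map_add, ← evalP_eq_evalHom, ← evalP_eq_evalHom,
    evalP_eq_zero_of_mem_momentMinors hP hj, add_zero]

theorem Amat_one : Amat 1 = 0 := by
  ext j k
  simp [Amat, Matrix.trace, Subsingleton.elim j 0, Subsingleton.elim k 0]

theorem trAB_one_right_zero {p : ℕ} (hp : p ≠ 0) : trAB 1 p 0 = 0 := by
  rw [trAB_right_zero, Amat_one, zero_pow hp, Matrix.trace_zero]

end Evaluation

end CalogeroMoser

theorem stmt_10_general (n : ℕ) (hn : 1 ≤ n) (l m : ℕ) (i p q : ℕ → ℕ)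
    (hi : ∃ a < l, i a ≠ 0) :
    ∃ g : PolyFun n, LieGen n (calF n) g ∧
      ∀ P ∈ Shat n,
        evalP P.1 P.2
            ((∏ a ∈ Finset.range l, trAB n (i a) 0) *
              ∏ b ∈ Finset.range m, trAB n (p b) (q b))
          = evalP P.1 P.2 g := by
  obtain rfl | hn₂ := hn.eq_or_lt
  · obtain ⟨a, ha, hia⟩ := hi
    refine ⟨0, LieGen.zero, fun P _ => ?_⟩
    rw [Finset.prod_eq_zero (Finset.mem_range.mpr ha) (CalogeroMoser.trAB_one_right_zero hia),
      zero_mul]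
  · obtain ⟨a, ha⟩ := CalogeroMoser.prod_mem_filt (Finset.range l) (f := fun a => trAB n (i a) 0)
      fun _ _ => ⟨_, CalogeroMoser.trAB_mem_filt hn _ _⟩
    obtain ⟨b, hb⟩ := CalogeroMoser.prod_mem_filt (Finset.range m)
      (f := fun b => trAB n (p b) (q b)) fun _ _ => ⟨_, CalogeroMoser.trAB_mem_filt hn _ _⟩
    exact CalogeroMoser.exists_lieGen_of_mem_filt hn₂ (CalogeroMoser.mul_mem_filt ha hb)

/-- STATEMENT 10 (Lemma on `(∏ tr A^{i_a}) · ∏ tr A^{p_b} B^{q_b}`), assuming the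
induction hypothesis `H(D)`. -/
theorem stmt_10 (n : ℕ) (hn : 1 ≤ n) (D : ℕ)
    (H : ∀ m : ℕ, 1 ≤ m → ∀ p q : ℕ → ℕ,
      (∑ k ∈ Finset.range m, (p k + q k)) ≤ D →
      ∃ g : PolyFun n, LieGen n (calF n) g ∧
        ∀ P ∈ Shat n,
          evalP P.1 P.2 (∏ k ∈ Finset.range m, trAB n (p k) (q k)) = evalP P.1 P.2 g)
    (l : ℕ) (hl : 1 ≤ l) (m : ℕ) (i : ℕ → ℕ) (p q : ℕ → ℕ)
    (hi : ∀ a < l, 2 ≤ i a)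
    (hdeg : (∑ a ∈ Finset.range l, i a) + (∑ b ∈ Finset.range m, (p b + q b)) ≤ D + 4) :
    ∃ g : PolyFun n, LieGen n (calF n) g ∧
      ∀ P ∈ Shat n,
        evalP P.1 P.2
            ((∏ a ∈ Finset.range l, trAB n (i a) 0) *
              ∏ b ∈ Finset.range m, trAB n (p b) (q b))
          = evalP P.1 P.2 g := by
  exact stmt_10_general n hn l m i p q ⟨0, hl, (two_pos.trans_le (hi 0 hl)).ne'⟩
end

section
/- Let D ≥ 0 be an integer and assume the induction hypothesis H(D): for every m ≥ 1 and all natural numbers p_1, …, p_m, q_1, …, q_m with Σ_k (p_k + q_k) ≤ D, the product Π_{k=1}^m tr(A^{p_k} B^{q_k}) agrees at every point of Ŝ_n with some element of Lie(ℱ). Then for every m ≥ 1 and all natural numbers p_1, …, p_m, q_1, …, q_m with Σ_k (p_k + q_k) ≤ D + 4, the product Π_{k=1}^m tr(A^{p_k} B^{q_k}) agrees at every point of Ŝ_n with some element of Lie(ℱ). -/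
open MvPolynomial Matrix

/-!
On `Ŝ_n` the matrix `[A, B] - i` has rank one, so its `2 × 2` minors vanish there. All brackets are
computed modulo the ideal of these minors; this is legitimate because invariants under simultaneous
conjugation Poisson commute with `[A, B] - i`, so that their brackets preserve the ideal. Modulo the
minors, `tr U M V M = tr U M · tr V M` for `M = [A, B] - i`. Together with the vanishing of the sum
of the traces `tr B^j A^p B^i [A, B]` over `i + j = q`, this gives inductively that `tr U M`, for a
word `U` in `A` and `B`, is a combination of products of traces of degree at most `deg U`. Hence a
trace of a word depends, up to products of smaller degree, only on the number of letters of each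
kind.

One then shows, by induction on the degree and on the number of factors, that all products of
traces lie in `Lie(ℱ)` up to constants. `{tr A³, tr A^e B}` and `(tr AB)²` give `tr A^d`. The
correction term `n⁻¹ tr A^k tr A^p B^q` in `{tr A^(k+1), tr A^p B^(q+1)}`, which comes from removing
traces, lets one attach a factor `tr A^k` to a product. Brackets with `tr B²` turn this factor into
any `tr A^p B^q`. The constants themselves come from `H(0)`.
-/

section Leibniz

open Finset.HasAntidiagonal (antidiagonal mem_antidiagonal)

theorem map_pow_succ_of_leibniz {R : Type*} [Semiring R] {D : R → R}
    (hD : ∀ x y, D (x * y) = D x * y + x * D y) (x : R) (k : ℕ) :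
    D (x ^ (k + 1)) = ∑ ij ∈ antidiagonal k, x ^ ij.1 * D x * x ^ ij.2 := by
  induction k with
  | zero => simp
  | succ k ih =>
    rw [pow_succ, hD, ih, Finset.Nat.sum_antidiagonal_succ']
    simp [Finset.sum_mul, pow_succ, mul_assoc, add_comm]

variable {K R ι : Type*} [CommSemiring K] [CommSemiring R] [Algebra K R] [Fintype ι]
  (δ : Derivation K R R)

theorem map_derivation_mul (U V : Matrix ι ι R) :
    (U * V).map δ = U.map δ * V + U * V.map δ := by
  ext i j
  simp only [Matrix.map_apply, Matrix.mul_apply, Matrix.add_apply, map_sum, Derivation.leibniz,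
    smul_eq_mul, ← Finset.sum_add_distrib]
  exact Finset.sum_congr rfl fun k _ => by ring

theorem derivation_trace (U : Matrix ι ι R) : δ (trace U) = trace (U.map δ) := by
  simp [trace]

theorem derivation_trace_pow_succ [DecidableEq ι] (U : Matrix ι ι R) (k : ℕ) :
    δ (trace (U ^ (k + 1))) = (k + 1) • trace (U ^ k * U.map δ) := by
  have hterm : ∀ ij ∈ antidiagonal k,
      trace (U ^ ij.1 * U.map δ * U ^ ij.2) = trace (U ^ k * U.map δ) := fun ij hij => by
    rw [trace_mul_comm, ← mul_assoc, ← pow_add, add_comm, mem_antidiagonal.mp hij]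
  rw [derivation_trace, map_pow_succ_of_leibniz (D := fun V : Matrix ι ι R => V.map δ)
    (map_derivation_mul δ), trace_sum, Finset.sum_congr rfl hterm, Finset.sum_const,
    Finset.Nat.card_antidiagonal]

theorem map_derivation_pow_eq_zero [DecidableEq ι] {U : Matrix ι ι R} (hU : U.map δ = 0) (k : ℕ) :
    (U ^ k).map δ = 0 := by
  cases k with
  | zero =>
    ext i j
    simp [one_apply, apply_ite δ]
  | succ k =>
    rw [map_pow_succ_of_leibniz (D := fun V : Matrix ι ι R => V.map δ) (map_derivation_mul δ), hU]
    simp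

theorem map_derivation_lie {R : Type*} [CommRing R] [Algebra K R] (δ : Derivation K R R)
    (U V : Matrix ι ι R) : ⁅U, V⁆.map δ = ⁅U.map δ, V⁆ + ⁅U, V.map δ⁆ := by
  rw [Ring.lie_def, Matrix.map_sub _ (map_sub δ), map_derivation_mul, map_derivation_mul,
    Ring.lie_def, Ring.lie_def]
  abel

end Leibniz

section Traceless

variable {K R ι : Type*} [Field K] [CommRing R] [Algebra K R] [Fintype ι] [DecidableEq ι]

/-- The traceless part `U - (tr U / card ι) • 1` of a matrix, the division being carried out in a
ground field `K` of the ring of entries. -/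
def traceless (K : Type*) [Field K] [Algebra K R] : Matrix ι ι R →ₗ[R] Matrix ι ι R where
  toFun U := U - (algebraMap K R (Fintype.card ι : K)⁻¹ * trace U) • 1
  map_add' U V := by rw [trace_add, mul_add, add_smul]; abel
  map_smul' c U := by
    rw [trace_smul, smul_eq_mul, RingHom.id_apply, smul_sub, smul_smul, mul_left_comm]

theorem traceless_apply (U : Matrix ι ι R) :
    traceless K U = U - (algebraMap K R (Fintype.card ι : K)⁻¹ * trace U) • 1 :=
  rfl

theorem trace_mul_traceless (U V : Matrix ι ι R) :
    trace (U * traceless K V) =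
      trace (U * V) - algebraMap K R (Fintype.card ι : K)⁻¹ * trace V * trace U := by
  rw [traceless_apply, mul_sub, Matrix.mul_smul, mul_one, trace_sub, trace_smul, smul_eq_mul]

theorem trace_mul_traceless_single (U : Matrix ι ι R) (a b : ι) :
    trace (U * traceless K (single b a 1)) = traceless K U a b := by
  rw [trace_mul_traceless, trace_mul_single, traceless_apply, Matrix.sub_apply, Matrix.smul_apply,
    smul_eq_mul]
  obtain rfl | hab := eq_or_ne a b
  · simp
  · simp [hab, trace_single_eq_of_ne _ _ _ hab.symm]

theorem traceless_of_trace_eq_zero {U : Matrix ι ι R} (hU : trace U = 0) : traceless K U = U := by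
  rw [traceless_apply, hU, mul_zero, zero_smul, sub_zero]

theorem trace_traceless [CharZero K] (U : Matrix ι ι R) : trace (traceless K U) = 0 := by
  cases isEmpty_or_nonempty ι
  · simp [trace]
  · rw [← one_mul (traceless K U), trace_mul_traceless, one_mul, trace_one, mul_right_comm,
      ← map_natCast (algebraMap K R), ← map_mul, inv_mul_cancel₀ (by simp), map_one, one_mul,
      sub_self]

theorem traceless_traceless [CharZero K] (U : Matrix ι ι R) :
    traceless K (traceless K U) = traceless K U :=
  traceless_of_trace_eq_zero (trace_traceless U)

theorem lie_traceless (U V : Matrix ι ι R) : ⁅U, traceless K V⁆ = ⁅U, V⁆ := by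
  simp [Ring.lie_def, traceless_apply, mul_sub, sub_mul]

theorem map_derivation_traceless (δ : Derivation K R R) (U : Matrix ι ι R) :
    (traceless K U).map δ = traceless K (U.map δ) := by
  ext i j
  simp [traceless_apply, one_apply, apply_ite δ, derivation_trace]

open Finset.HasAntidiagonal (antidiagonal mem_antidiagonal) in
theorem derivation_trace_mul_pow_succ {δ : Derivation K R R} {U V W : Matrix ι ι R}
    (hU : U.map δ = 0) (hV : V.map δ = traceless K W) (q : ℕ) :
    δ (trace (U * V ^ (q + 1))) = ∑ ij ∈ antidiagonal q, trace (U * V ^ ij.1 * (W * V ^ ij.2))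
      - (q + 1) • (algebraMap K R (Fintype.card ι : K)⁻¹ * trace W * trace (U * V ^ q)) := by
  have hterm : ∀ ij ∈ antidiagonal q,
      trace (U * (V ^ ij.1 * V.map δ * V ^ ij.2)) = trace (U * V ^ ij.1 * (W * V ^ ij.2)) -
        algebraMap K R (Fintype.card ι : K)⁻¹ * trace W * trace (U * V ^ q) := fun ij hij => by
    have hcyc (Z : Matrix ι ι R) :
        trace (U * (V ^ ij.1 * Z * V ^ ij.2)) = trace (V ^ ij.2 * U * V ^ ij.1 * Z) := by
      rw [← mul_assoc, ← mul_assoc, trace_mul_comm, ← mul_assoc, ← mul_assoc]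
    rw [hV, hcyc, trace_mul_traceless, ← hcyc, ← mem_antidiagonal.mp hij, pow_add,
      mul_assoc (V ^ ij.2), trace_mul_comm (V ^ ij.2)]
    simp only [mul_assoc]
  rw [derivation_trace, map_derivation_mul, hU, zero_mul, zero_add,
    map_pow_succ_of_leibniz (D := fun Z : Matrix ι ι R => Z.map δ) (map_derivation_mul δ),
    Finset.mul_sum, trace_sum, Finset.sum_congr rfl hterm, Finset.sum_sub_distrib, Finset.sum_const,
    Finset.Nat.card_antidiagonal]

end Traceless

section PoissonBracket

variable {n : ℕ}

theorem pderiv_pderiv_comm {σ R : Type*} [CommRing R] (u v : σ) (F : MvPolynomial σ R) :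
    pderiv u (pderiv v F) = pderiv v (pderiv u F) := by
  classical
  have h : ⁅pderiv u, pderiv v⁆ = (0 : Derivation R (MvPolynomial σ R) (MvPolynomial σ R)) :=
    derivation_ext fun w => by
      rw [Derivation.commutator_apply]
      simp [pderiv_X, Pi.single_apply, apply_ite]
  rw [← sub_eq_zero, ← Derivation.commutator_apply, h, Derivation.zero_apply]

/-- The Hamiltonian derivation `{F, ·}` of a polynomial function `F`. -/
noncomputable def ham (F : PolyFun n) : Derivation ℂ (PolyFun n) (PolyFun n) :=
  ∑ j : Fin n, ∑ k : Fin n,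
    (pderiv (Sum.inl (j, k)) F • pderiv (Sum.inr (k, j))
      - pderiv (Sum.inr (j, k)) F • pderiv (Sum.inl (k, j)))

theorem ham_apply (F G : PolyFun n) : ham F G = pbracket F G := by
  simp only [ham, pbracket, ← Derivation.coeFnAddMonoidHom_apply, map_sum, Finset.sum_apply]
  simp

theorem pbracket_antisymm (F G : PolyFun n) : pbracket F G = -pbracket G F := by
  simp only [pbracket, ← Finset.sum_neg_distrib]
  rw [Finset.sum_comm]
  exact Finset.sum_congr rfl fun j _ => Finset.sum_congr rfl fun k _ => by ring

theorem pbracket_neg_right (F G : PolyFun n) : pbracket F (-G) = -pbracket F G := by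
  simp only [← ham_apply, map_neg]

theorem pbracket_mul_right (F G H : PolyFun n) :
    pbracket F (G * H) = G * pbracket F H + H * pbracket F G := by
  simp only [← ham_apply, Derivation.leibniz, smul_eq_mul]

theorem pbracket_Xmat_right (F : PolyFun n) (a b : Fin n) :
    pbracket F (Xmat n a b) = -pderiv (Sum.inr (b, a)) F := by
  simp [pbracket, Xmat, pderiv_X, Pi.single_apply, ite_and, Finset.sum_ite_eq]

theorem pbracket_Ymat_right (F : PolyFun n) (a b : Fin n) :
    pbracket F (Ymat n a b) = pderiv (Sum.inl (b, a)) F := by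
  simp [pbracket, Ymat, pderiv_X, Pi.single_apply, ite_and, Finset.sum_ite_eq]

theorem pderiv_pbracket (v : (Fin n × Fin n) ⊕ (Fin n × Fin n)) (F G : PolyFun n) :
    pderiv v (pbracket F G) = pbracket (pderiv v F) G + pbracket F (pderiv v G) := by
  simp only [pbracket, map_sum, map_sub, Derivation.leibniz, smul_eq_mul, pderiv_pderiv_comm v,
    ← Finset.sum_add_distrib]
  exact Finset.sum_congr rfl fun j _ => Finset.sum_congr rfl fun k _ => by ring

theorem ham_pbracket (F G : PolyFun n) : ham (pbracket F G) = ⁅ham F, ham G⁆ := by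
  refine derivation_ext fun v => ?_
  rw [Derivation.commutator_apply]
  simp only [ham_apply]
  obtain ⟨a, b⟩ | ⟨a, b⟩ := v
  · rw [← Xmat]
    simp only [pbracket_Xmat_right, pderiv_pbracket, pbracket_neg_right]
    rw [pbracket_antisymm _ G]
    ring
  · rw [← Ymat]
    simp only [pbracket_Ymat_right, pderiv_pbracket]
    rw [pbracket_antisymm _ G]
    ring

end PoissonBracket

section HamiltonianAction

variable {n : ℕ}

theorem Amat_eq_traceless : Amat n = traceless ℂ (Xmat n) := by
  simp [Amat, traceless_apply, algebraMap_eq]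

theorem Bmat_eq_traceless : Bmat n = traceless ℂ (Ymat n) := by
  simp [Bmat, traceless_apply, algebraMap_eq]

theorem traceless_Amat : traceless ℂ (Amat n) = Amat n := by
  rw [Amat_eq_traceless, traceless_traceless]

theorem traceless_Bmat : traceless ℂ (Bmat n) = Bmat n := by
  rw [Bmat_eq_traceless, traceless_traceless]

theorem map_pderiv_inl_Amat (a b : Fin n) :
    (Amat n).map (pderiv (Sum.inl (a, b))) = traceless ℂ (single a b 1) := by
  rw [Amat_eq_traceless, map_derivation_traceless]
  congr 1
  ext i j
  simp [Xmat, pderiv_X, Pi.single_apply, single_apply, eq_comm]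

theorem map_pderiv_inr_Amat (v : Fin n × Fin n) : (Amat n).map (pderiv (Sum.inr v)) = 0 := by
  have hX : (Xmat n).map (pderiv (Sum.inr v)) = 0 := by
    ext i j
    simp [Xmat, pderiv_X]
  rw [Amat_eq_traceless, map_derivation_traceless, hX, map_zero]

theorem map_pderiv_inr_Bmat (a b : Fin n) :
    (Bmat n).map (pderiv (Sum.inr (a, b))) = traceless ℂ (single a b 1) := by
  rw [Bmat_eq_traceless, map_derivation_traceless]
  congr 1
  ext i j
  simp [Ymat, pderiv_X, Pi.single_apply, single_apply, eq_comm]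

theorem map_pderiv_inl_Bmat (v : Fin n × Fin n) : (Bmat n).map (pderiv (Sum.inl v)) = 0 := by
  have hY : (Ymat n).map (pderiv (Sum.inl v)) = 0 := by
    ext i j
    simp [Ymat, pderiv_X]
  rw [Bmat_eq_traceless, map_derivation_traceless, hY, map_zero]

/-- The matrix `∂F/∂Xᵀ` of the derivatives of `F` in the coordinates `X_{jk}`, transposed so that
`{F, Y} = gradX F`. -/
noncomputable def gradX (F : PolyFun n) : Matrix (Fin n) (Fin n) (PolyFun n) :=
  of fun a b => pderiv (Sum.inl (b, a)) F

/-- The matrix `∂F/∂Yᵀ` of the derivatives of `F` in the coordinates `Y_{jk}`, transposed so that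
`{F, X} = -gradY F`. -/
noncomputable def gradY (F : PolyFun n) : Matrix (Fin n) (Fin n) (PolyFun n) :=
  of fun a b => pderiv (Sum.inr (b, a)) F

theorem map_ham_Amat (F : PolyFun n) : (Amat n).map (ham F) = -traceless ℂ (gradY F) := by
  rw [Amat_eq_traceless, map_derivation_traceless, ← map_neg]
  congr 1
  ext a b
  simp [gradY, ham_apply, pbracket_Xmat_right]

theorem map_ham_Bmat (F : PolyFun n) : (Bmat n).map (ham F) = traceless ℂ (gradX F) := by
  rw [Bmat_eq_traceless, map_derivation_traceless]
  congr 1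
  ext a b
  simp [gradX, ham_apply, pbracket_Ymat_right]

theorem gradX_trace_Amat_pow_succ (k : ℕ) :
    gradX (trace (Amat n ^ (k + 1))) = traceless ℂ ((k + 1) • Amat n ^ k) := by
  rw [map_nsmul]
  ext a b
  simp [gradX, derivation_trace_pow_succ, map_pderiv_inl_Amat, trace_mul_traceless_single]

theorem gradY_trace_Amat_pow_succ (k : ℕ) : gradY (trace (Amat n ^ (k + 1))) = 0 := by
  ext a b
  simp [gradY, derivation_trace_pow_succ, map_pderiv_inr_Amat]

theorem gradX_trace_Bmat_pow_succ (k : ℕ) : gradX (trace (Bmat n ^ (k + 1))) = 0 := by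
  ext a b
  simp [gradX, derivation_trace_pow_succ, map_pderiv_inl_Bmat]

theorem gradY_trace_Bmat_pow_succ (k : ℕ) :
    gradY (trace (Bmat n ^ (k + 1))) = traceless ℂ ((k + 1) • Bmat n ^ k) := by
  rw [map_nsmul]
  ext a b
  simp [gradY, derivation_trace_pow_succ, map_pderiv_inr_Bmat, trace_mul_traceless_single]

theorem gradX_trace_Amat_mul_Bmat : gradX (trace (Amat n * Bmat n)) = Bmat n := by
  ext a b
  simp only [gradX, of_apply, derivation_trace, map_derivation_mul, map_pderiv_inl_Amat,
    map_pderiv_inl_Bmat, mul_zero, add_zero]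
  rw [trace_mul_comm, trace_mul_traceless_single, traceless_Bmat]

theorem gradY_trace_Amat_mul_Bmat : gradY (trace (Amat n * Bmat n)) = Amat n := by
  ext a b
  simp only [gradY, of_apply, derivation_trace, map_derivation_mul, map_pderiv_inr_Amat,
    map_pderiv_inr_Bmat, zero_mul, zero_add]
  rw [trace_mul_traceless_single, traceless_Amat]

end HamiltonianAction

section MinorIdeal

variable {R ι κ : Type*} [CommRing R]

/-- The ideal generated by the `2 × 2` minors of a matrix, degenerate minors included. -/
def minorIdeal (Z : Matrix ι κ R) : Ideal R :=
  Ideal.span {F | ∃ i j k l, F = Z i j * Z k l - Z i l * Z k j}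

theorem minor_mem_minorIdeal (Z : Matrix ι κ R) (i k : ι) (j l : κ) :
    Z i j * Z k l - Z i l * Z k j ∈ minorIdeal Z :=
  Ideal.subset_span ⟨i, j, k, l, rfl⟩

theorem mul_mul_apply_sub_trace_mul_mem_minorIdeal [Fintype ι] [Fintype κ] (Z : Matrix ι κ R)
    (V : Matrix κ ι R) (i : ι) (j : κ) :
    (Z * V * Z) i j - trace (V * Z) * Z i j ∈ minorIdeal Z := by
  have hsum : (Z * V * Z) i j - trace (V * Z) * Z i j =
      ∑ c, ∑ b, V b c * (Z i b * Z c j - Z i j * Z c b) := by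
    rw [trace_mul_comm]
    simp only [trace, diag_apply, Matrix.mul_apply, Finset.sum_mul, ← Finset.sum_sub_distrib]
    exact Finset.sum_congr rfl fun c _ => Finset.sum_congr rfl fun b _ => by ring
  rw [hsum]
  exact sum_mem fun c _ => sum_mem fun b _ =>
    Ideal.mul_mem_left _ _ (minor_mem_minorIdeal Z i c b j)

theorem trace_mul_mul_mul_sub_mem_minorIdeal [Fintype ι] [Fintype κ] (Z : Matrix ι κ R)
    (U V : Matrix κ ι R) :
    trace (U * Z * V * Z) - trace (U * Z) * trace (V * Z) ∈ minorIdeal Z := by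
  have hsum : trace (U * Z * V * Z) - trace (U * Z) * trace (V * Z) =
      ∑ i, ∑ j, U i j * ((Z * V * Z) j i - trace (V * Z) * Z j i) := by
    rw [Matrix.mul_assoc, Matrix.mul_assoc, ← Matrix.mul_assoc Z]
    generalize Z * V * Z = W, trace (V * Z) = t
    simp only [trace, diag_apply, Matrix.mul_apply, Finset.sum_mul, ← Finset.sum_sub_distrib]
    exact Finset.sum_congr rfl fun i _ => Finset.sum_congr rfl fun j _ => by ring
  rw [hsum]
  exact sum_mem fun i _ => sum_mem fun j _ =>
    Ideal.mul_mem_left _ _ (mul_mul_apply_sub_trace_mul_mem_minorIdeal Z V j i)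

theorem derivation_mem_minorIdeal {K : Type*} [CommSemiring K] [Algebra K R]
    {δ : Derivation K R R} {Z : Matrix ι κ R} (hZ : ∀ i j, δ (Z i j) = 0) {F : R}
    (hF : F ∈ minorIdeal Z) : δ F ∈ minorIdeal Z := by
  induction hF using Submodule.span_induction with
  | mem F hF =>
    obtain ⟨i, j, k, l, rfl⟩ := hF
    simp [hZ]
  | zero => simp
  | add F G _ _ hF hG =>
    rw [map_add]
    exact add_mem hF hG
  | smul a F hmem hF =>
    rw [smul_eq_mul, Derivation.leibniz]
    exact add_mem (Ideal.mul_mem_left _ _ hF) (Ideal.mul_mem_right _ _ hmem)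

theorem map_eq_zero_of_mem_minorIdeal {L : Type*} [Field L] [Fintype κ] {Z : Matrix ι κ R}
    (e : R →+* L) (hZ : (Z.map e).rank ≤ 1) {F : R} (hF : F ∈ minorIdeal Z) : e F = 0 := by
  classical
  obtain ⟨v, hv⟩ := finrank_le_one_iff.mp hZ
  have hcol : ∀ j, ∃ c : L, ∀ i, e (Z i j) = c * v.1 i := fun j => by
    obtain ⟨c, hc⟩ := hv ⟨(Z.map e).mulVecLin (Pi.single j 1), LinearMap.mem_range_self _ _⟩
    exact ⟨c, fun i => by simpa using (congrFun (congrArg Subtype.val hc) i).symm⟩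
  choose c hc using hcol
  suffices minorIdeal Z ≤ RingHom.ker e from this hF
  refine Ideal.span_le.mpr ?_
  rintro _ ⟨i, j, k, l, rfl⟩
  simp only [SetLike.mem_coe, RingHom.mem_ker, map_sub, map_mul, hc]
  ring

end MinorIdeal

section MomentMap

variable {n : ℕ}

/-- The shifted moment map `[A, B] - i` of the Calogero–Moser variety. -/
noncomputable def Mmat (n : ℕ) : Matrix (Fin n) (Fin n) (PolyFun n) :=
  ⁅Amat n, Bmat n⁆ - Complex.I • 1

theorem map_eval_Amat {X : Matrix (Fin n) (Fin n) ℂ} (hX : trace X = 0)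
    (Y : Matrix (Fin n) (Fin n) ℂ) :
    (Amat n).map (MvPolynomial.eval (Sum.elim (fun p => X p.1 p.2) fun p => Y p.1 p.2)) = X := by
  ext i j
  simp [Amat, Xmat, trace, one_apply, apply_ite, show ∑ i, X i i = 0 from hX]

theorem map_eval_Bmat (X : Matrix (Fin n) (Fin n) ℂ) {Y : Matrix (Fin n) (Fin n) ℂ}
    (hY : trace Y = 0) :
    (Bmat n).map (MvPolynomial.eval (Sum.elim (fun p => X p.1 p.2) fun p => Y p.1 p.2)) = Y := by
  ext i j
  simp [Bmat, Ymat, trace, one_apply, apply_ite, show ∑ i, Y i i = 0 from hY]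

theorem evalP_eq_zero_of_mem_minorIdeal {P : Matrix (Fin n) (Fin n) ℂ × Matrix (Fin n) (Fin n) ℂ}
    (hP : P ∈ Shat n) {F : PolyFun n} (hF : F ∈ minorIdeal (Mmat n)) : evalP P.1 P.2 F = 0 := by
  obtain ⟨hX, hY, hrank⟩ := hP
  set e : PolyFun n →+* ℂ :=
    MvPolynomial.eval (Sum.elim (fun p => P.1 p.1 p.2) fun p => P.2 p.1 p.2)
  have hM : (Mmat n).map e = P.1 * P.2 - P.2 * P.1 - Complex.I • 1 := by
    have hA : e.mapMatrix (Amat n) = P.1 := map_eval_Amat hX P.2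
    have hB : e.mapMatrix (Bmat n) = P.2 := map_eval_Bmat P.1 hY
    have hI : e.mapMatrix (Complex.I • (1 : Matrix (Fin n) (Fin n) (PolyFun n))) =
        Complex.I • 1 := by
      ext i j
      obtain rfl | hij := eq_or_ne i j <;> simp [e, *]
    rw [← e.mapMatrix_apply, Mmat, Ring.lie_def, map_sub, map_sub, map_mul, map_mul, hA, hB, hI]
  exact map_eq_zero_of_mem_minorIdeal e (hM ▸ hrank.le) hF

/-- The algebra of polynomial functions Poisson commuting with every entry of `[A, B] - i`. -/
noncomputable def momentInvariants (n : ℕ) : Subalgebra ℂ (PolyFun n) where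
  carrier := {h | ∀ i j, ham (Mmat n i j) h = 0}
  mul_mem' hF hG i j := by simp [hF i j, hG i j]
  add_mem' hF hG i j := by simp [hF i j, hG i j]
  algebraMap_mem' c i j := derivation_C _ c

theorem mem_momentInvariants {h : PolyFun n} :
    h ∈ momentInvariants n ↔ ∀ i j, ham h (Mmat n i j) = 0 := by
  refine forall_congr' fun i => forall_congr' fun j => ?_
  rw [ham_apply, ham_apply, pbracket_antisymm, neg_eq_zero]

theorem pbracket_mem_momentInvariants {F G : PolyFun n} (hF : F ∈ momentInvariants n)
    (hG : G ∈ momentInvariants n) : pbracket F G ∈ momentInvariants n := by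
  rw [mem_momentInvariants] at *
  intro i j
  rw [ham_pbracket, Derivation.commutator_apply, hF, hG, map_zero, map_zero, sub_zero]

theorem pbracket_mem_minorIdeal {h F : PolyFun n} (hh : h ∈ momentInvariants n)
    (hF : F ∈ minorIdeal (Mmat n)) : pbracket h F ∈ minorIdeal (Mmat n) := by
  rw [← ham_apply]
  exact derivation_mem_minorIdeal (mem_momentInvariants.mp hh) hF

theorem mem_momentInvariants_of_lie_grad {h : PolyFun n}
    (hh : ⁅Amat n, gradX h⁆ + ⁅Bmat n, gradY h⁆ = 0) : h ∈ momentInvariants n := by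
  have hmap : (Mmat n).map (ham h) = ⁅Amat n, gradX h⁆ + ⁅Bmat n, gradY h⁆ := by
    have hone : (Complex.I • (1 : Matrix (Fin n) (Fin n) (PolyFun n))).map (ham h) = 0 := by
      ext i j
      simp [one_apply, apply_ite]
    have hskew (U V : Matrix (Fin n) (Fin n) (PolyFun n)) : ⁅-U, V⁆ = ⁅V, U⁆ := by
      simp only [Ring.lie_def]
      noncomm_ring
    rw [Mmat, Matrix.map_sub _ (map_sub _), hone, map_derivation_lie, map_ham_Amat, map_ham_Bmat,
      lie_traceless, hskew, lie_traceless, sub_zero, add_comm]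
  rw [mem_momentInvariants]
  exact fun i j => congrFun₂ (hmap.trans hh) i j

theorem trace_Amat_pow_mem_momentInvariants (k : ℕ) :
    trace (Amat n ^ (k + 1)) ∈ momentInvariants n :=
  mem_momentInvariants_of_lie_grad <| by
    rw [gradX_trace_Amat_pow_succ, gradY_trace_Amat_pow_succ, lie_traceless,
      (((Commute.refl _).pow_right k).smul_right _).lie_eq, (Commute.zero_right _).lie_eq, add_zero]

theorem trace_Bmat_pow_mem_momentInvariants (k : ℕ) :
    trace (Bmat n ^ (k + 1)) ∈ momentInvariants n :=
  mem_momentInvariants_of_lie_grad <| by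
    rw [gradX_trace_Bmat_pow_succ, gradY_trace_Bmat_pow_succ, lie_traceless,
      (Commute.zero_right _).lie_eq, (((Commute.refl _).pow_right k).smul_right _).lie_eq, add_zero]

theorem trace_Amat_mul_Bmat_mem_momentInvariants :
    trace (Amat n * Bmat n) ∈ momentInvariants n :=
  mem_momentInvariants_of_lie_grad <| by
    rw [gradX_trace_Amat_mul_Bmat, gradY_trace_Amat_mul_Bmat]
    simp only [Ring.lie_def, sub_add_sub_cancel, sub_self]

theorem trAB_zero_right (k : ℕ) : trAB n k 0 = trace (Amat n ^ k) := by simp [trAB]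

theorem trAB_zero_left (k : ℕ) : trAB n 0 k = trace (Bmat n ^ k) := by simp [trAB]

theorem trAB_one_one : trAB n 1 1 = trace (Amat n * Bmat n) := by simp [trAB]

theorem mem_momentInvariants_of_lieGen {g : PolyFun n} (hg : LieGen n (calF n) g) :
    g ∈ momentInvariants n := by
  induction hg with
  | base hf =>
    rcases hf with rfl | rfl | rfl | rfl
    · exact trAB_zero_right (n := n) 2 ▸ trace_Amat_pow_mem_momentInvariants 1
    · exact trAB_zero_left (n := n) 2 ▸ trace_Bmat_pow_mem_momentInvariants 1
    · exact trAB_zero_right (n := n) 3 ▸ trace_Amat_pow_mem_momentInvariants 2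
    · exact trAB_one_one (n := n) ▸ pow_mem trace_Amat_mul_Bmat_mem_momentInvariants 2
  | zero => exact zero_mem _
  | add _ _ hf hg => exact add_mem hf hg
  | smul c _ hf => exact Subalgebra.smul_mem _ hf c
  | bracket _ _ hf hg => exact pbracket_mem_momentInvariants hf hg

end MomentMap

section Words

/-- The product of the letters `a` (for `true`) and `b` (for `false`) of a word. -/
def word {G : Type*} [Monoid G] (a b : G) (l : List Bool) : G :=
  (l.map fun x => if x then a else b).prod

theorem word_append {G : Type*} [Monoid G] (a b : G) (l₁ l₂ : List Bool) :
    word a b (l₁ ++ l₂) = word a b l₁ * word a b l₂ := by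
  simp [word]

theorem word_cons {G : Type*} [Monoid G] (a b : G) (x : Bool) (l : List Bool) :
    word a b (x :: l) = (if x then a else b) * word a b l := by
  simp [word]

theorem word_replicate_true {G : Type*} [Monoid G] (a b : G) (k : ℕ) :
    word a b (List.replicate k true) = a ^ k := by
  simp [word]

theorem word_replicate_false {G : Type*} [Monoid G] (a b : G) (k : ℕ) :
    word a b (List.replicate k false) = b ^ k := by
  simp [word]

variable {k R ι : Type*} [Ring k] [CommRing R] [Module k R] [Fintype ι] [DecidableEq ι]

theorem trace_word_mul_sModEq_of_perm {S : Submodule k R} {a b : Matrix ι ι R} {l₁ l₂ : List Bool}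
    (h : l₁.Perm l₂) (Z : Matrix ι ι R)
    (hS : ∀ u v : List Bool, u.length + v.length + 2 = l₁.length →
      trace (word a b u * ⁅a, b⁆ * word a b v * Z) ∈ S) :
    trace (word a b l₁ * Z) ≡ trace (word a b l₂ * Z) [SMOD S] := by
  induction h generalizing Z with
  | nil => rfl
  | @cons x l₁ l₂ _ ih =>
    have hcyc (U : Matrix ι ι R) :
        trace ((if x then a else b) * U * Z) = trace (U * (Z * if x then a else b)) := by
      rw [← mul_assoc U, trace_mul_comm (U * Z), mul_assoc]
    rw [word_cons, word_cons, hcyc, hcyc]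
    refine ih _ fun u v huv => ?_
    rw [← hcyc, ← mul_assoc, ← mul_assoc, ← word_cons]
    exact hS (x :: u) v (by simp only [List.length_cons]; omega)
  | swap x y l =>
    have hmem : trace (a * (b * (word a b l * Z))) ≡
        trace (b * (a * (word a b l * Z))) [SMOD S] := by
      have := hS [] l (by simp only [List.length_cons, List.length_nil]; omega)
      rw [SModEq.sub_mem, ← trace_sub]
      simpa only [word, List.map_nil, List.prod_nil, one_mul, Ring.lie_def, sub_mul,
        mul_assoc] using this
    cases x <;> cases y <;>
      simp only [word_cons, if_true, Bool.false_eq_true, if_false, mul_assoc, SModEq.refl]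
    · exact hmem
    · exact hmem.symm
  | trans h₁ _ ih₁ ih₂ =>
    exact (ih₁ Z hS).trans (ih₂ Z fun u v huv => hS u v (by rw [huv, h₁.length_eq]))

open Finset.HasAntidiagonal (antidiagonal) in
theorem sum_trace_pow_mul_mul_pow_mul_lie {a c : Matrix ι ι R} (b : Matrix ι ι R)
    (hac : Commute a c) (q : ℕ) :
    ∑ ij ∈ antidiagonal q, trace (b ^ ij.2 * (c * b ^ ij.1) * ⁅a, b⁆) = 0 := by
  have hleib : ⁅a, b ^ (q + 1)⁆ = ∑ ij ∈ antidiagonal q, b ^ ij.1 * ⁅a, b⁆ * b ^ ij.2 :=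
    map_pow_succ_of_leibniz (D := fun u => ⁅a, u⁆)
      (fun u v => by simp only [Ring.lie_def]; noncomm_ring) b q
  have htrace : trace (c * ⁅a, b ^ (q + 1)⁆) = 0 := by
    rw [Ring.lie_def, mul_sub, ← mul_assoc, ← mul_assoc, trace_sub, trace_mul_comm _ a, ← mul_assoc,
      hac.eq, sub_self]
  rw [← htrace, hleib, Finset.mul_sum, trace_sum]
  exact Finset.sum_congr rfl fun ij _ => by
    rw [mul_assoc, trace_mul_comm, ← mul_assoc, ← mul_assoc]

end Words

section TraceProducts

variable {n : ℕ}

/-- The product of the functions `tr A^p B^q` over a list of pairs `(p, q)`. -/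
noncomputable def traceProd (n : ℕ) (l : List (ℕ × ℕ)) : PolyFun n :=
  (l.map fun x => trAB n x.1 x.2).prod

/-- The total degree in `A` and `B` of a product of traces. -/
def traceDeg (l : List (ℕ × ℕ)) : ℕ :=
  (l.map fun x => x.1 + x.2).sum

theorem traceProd_nil : traceProd n [] = 1 := rfl

theorem traceProd_cons (p q : ℕ) (l : List (ℕ × ℕ)) :
    traceProd n ((p, q) :: l) = trAB n p q * traceProd n l := by
  simp [traceProd]

theorem traceProd_append (l₁ l₂ : List (ℕ × ℕ)) :
    traceProd n (l₁ ++ l₂) = traceProd n l₁ * traceProd n l₂ := by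
  simp [traceProd]

theorem traceDeg_cons (p q : ℕ) (l : List (ℕ × ℕ)) :
    traceDeg ((p, q) :: l) = p + q + traceDeg l := by
  simp [traceDeg]

theorem traceDeg_append (l₁ l₂ : List (ℕ × ℕ)) :
    traceDeg (l₁ ++ l₂) = traceDeg l₁ + traceDeg l₂ := by
  simp [traceDeg]

/-- The filtration of the products of traces by the degree, refined by the number of factors in the
top degree, and taken modulo the minors of `[A, B] - i`. In particular `traceFil n d 0` is, up to
minors, the span of the products of degree less than `d` (and of `1` when `d = 0`). -/
noncomputable def traceFil (n d m : ℕ) : Submodule ℂ (PolyFun n) :=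
  Submodule.span ℂ (traceProd n '' {l | traceDeg l < d ∨ traceDeg l = d ∧ l.length ≤ m})
    ⊔ (minorIdeal (Mmat n)).restrictScalars ℂ

theorem minorIdeal_le_traceFil (n d m : ℕ) :
    (minorIdeal (Mmat n)).restrictScalars ℂ ≤ traceFil n d m :=
  le_sup_right

theorem traceProd_mem_traceFil {d m : ℕ} {l : List (ℕ × ℕ)}
    (h : traceDeg l < d ∨ traceDeg l = d ∧ l.length ≤ m) : traceProd n l ∈ traceFil n d m :=
  Submodule.mem_sup_left (Submodule.subset_span ⟨l, h, rfl⟩)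

theorem traceProd_mem_traceFil_length (l : List (ℕ × ℕ)) :
    traceProd n l ∈ traceFil n (traceDeg l) l.length :=
  traceProd_mem_traceFil (.inr ⟨rfl, le_rfl⟩)

theorem trAB_mem_traceFil (n p q : ℕ) : trAB n p q ∈ traceFil n (p + q) 1 := by
  simpa [traceProd, traceDeg] using traceProd_mem_traceFil_length (n := n) [(p, q)]

theorem traceFil_le {d m : ℕ} {S : Submodule ℂ (PolyFun n)}
    (hprod : ∀ l, traceDeg l < d ∨ traceDeg l = d ∧ l.length ≤ m → traceProd n l ∈ S)
    (hminor : (minorIdeal (Mmat n)).restrictScalars ℂ ≤ S) : traceFil n d m ≤ S :=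
  sup_le (Submodule.span_le.mpr (Set.image_subset_iff.mpr hprod)) hminor

theorem traceFil_mono {d d' m m' : ℕ} (h : d < d' ∨ d = d' ∧ m ≤ m') :
    traceFil n d m ≤ traceFil n d' m' :=
  traceFil_le (fun _ _ => traceProd_mem_traceFil (by omega)) (minorIdeal_le_traceFil n d' m')

theorem mul_mem_traceFil {d d' m m' : ℕ} {F G : PolyFun n} (hF : F ∈ traceFil n d m)
    (hG : G ∈ traceFil n d' m') : F * G ∈ traceFil n (d + d') (m + m') := by
  have hminor {F G : PolyFun n} (hF : F ∈ minorIdeal (Mmat n)) :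
      F * G ∈ traceFil n (d + d') (m + m') :=
    minorIdeal_le_traceFil n _ _ (Ideal.mul_mem_right G _ hF)
  refine traceFil_le (S := (traceFil n (d + d') (m + m')).comap (LinearMap.mulRight ℂ G))
    (fun l hl => ?_) (fun F hF => hminor hF) hF
  refine traceFil_le
    (S := (traceFil n (d + d') (m + m')).comap (LinearMap.mulLeft ℂ (traceProd n l)))
    (fun l' hl' => ?_) (fun G hG => ?_) hG
  · simp only [Submodule.mem_comap, LinearMap.mulLeft_apply, ← traceProd_append]
    refine traceProd_mem_traceFil ?_
    rw [traceDeg_append, List.length_append]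
    omega
  · simp only [Submodule.mem_comap, LinearMap.mulLeft_apply]
    rw [mul_comm]
    exact hminor hG

end TraceProducts

section Reordering

open Finset.HasAntidiagonal (antidiagonal mem_antidiagonal)

variable {n : ℕ}

theorem lie_Amat_Bmat : ⁅Amat n, Bmat n⁆ = Mmat n + Complex.I • 1 := by
  rw [Mmat, sub_add_cancel]

theorem trace_mul_lie_Amat_Bmat (U : Matrix (Fin n) (Fin n) (PolyFun n)) :
    trace (U * ⁅Amat n, Bmat n⁆) = trace (U * Mmat n) + Complex.I • trace U := by
  rw [lie_Amat_Bmat, mul_add, trace_add, Matrix.mul_smul, mul_one, trace_smul]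

theorem perm_replicate_append_replicate (l : List Bool) :
    l.Perm (List.replicate (l.count true) true ++ List.replicate (l.count false) false) := by
  rw [List.perm_iff_count]
  rintro (_ | _) <;> simp [List.count_replicate]

theorem word_count (l : List Bool) :
    word (Amat n) (Bmat n)
        (List.replicate (l.count true) true ++ List.replicate (l.count false) false) =
      Amat n ^ l.count true * Bmat n ^ l.count false := by
  rw [word_append, word_replicate_true, word_replicate_false]

theorem trace_word_mul_lie_mul_word_mul_Mmat_mem {u v : List Bool}
    (hu : trace (word (Amat n) (Bmat n) u * Mmat n) ∈ traceFil n (u.length + 1) 0)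
    (hv : trace (word (Amat n) (Bmat n) v * Mmat n) ∈ traceFil n (v.length + 1) 0)
    (huv : trace (word (Amat n) (Bmat n) (u ++ v) * Mmat n) ∈
      traceFil n ((u ++ v).length + 1) 0) :
    trace (word (Amat n) (Bmat n) u * ⁅Amat n, Bmat n⁆ * word (Amat n) (Bmat n) v * Mmat n) ∈
      traceFil n (u.length + v.length + 3) 0 := by
  set U := word (Amat n) (Bmat n) u
  set V := word (Amat n) (Bmat n) v
  have heq : trace (U * ⁅Amat n, Bmat n⁆ * V * Mmat n) =
      (trace (U * Mmat n * V * Mmat n) - trace (U * Mmat n) * trace (V * Mmat n))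
        + trace (U * Mmat n) * trace (V * Mmat n)
        + Complex.I • trace (word (Amat n) (Bmat n) (u ++ v) * Mmat n) := by
    rw [lie_Amat_Bmat, mul_add, add_mul, add_mul, trace_add, Matrix.mul_smul, mul_one,
      Matrix.smul_mul, Matrix.smul_mul, trace_smul, word_append, sub_add_cancel]
  rw [heq]
  refine add_mem (add_mem (minorIdeal_le_traceFil n _ _ ?_) ?_) (Submodule.smul_mem _ _ ?_)
  · exact trace_mul_mul_mul_sub_mem_minorIdeal _ _ _
  · exact traceFil_mono (by omega) (mul_mem_traceFil hu hv)
  · refine traceFil_mono ?_ huv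
    rw [List.length_append]
    omega

theorem sum_trace_Bmat_pow_mul_Mmat (p q : ℕ) :
    ∑ ij ∈ antidiagonal q, trace (Bmat n ^ ij.2 * (Amat n ^ p * Bmat n ^ ij.1) * Mmat n) =
      -((q + 1) • Complex.I • trAB n p q) := by
  have hterm : ∀ ij ∈ antidiagonal q,
      trace (Bmat n ^ ij.2 * (Amat n ^ p * Bmat n ^ ij.1) * ⁅Amat n, Bmat n⁆) =
        trace (Bmat n ^ ij.2 * (Amat n ^ p * Bmat n ^ ij.1) * Mmat n) + Complex.I • trAB n p q :=
    fun ij hij => by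
      rw [trace_mul_lie_Amat_Bmat, trace_mul_comm (Bmat n ^ _) (_ * _),
        mul_assoc (Amat n ^ p) _ (_ ^ _), ← pow_add, mem_antidiagonal.mp hij, trAB]
  have hsum := sum_trace_pow_mul_mul_pow_mul_lie (Bmat n) ((Commute.refl (Amat n)).pow_right p) q
  rw [Finset.sum_congr rfl hterm, Finset.sum_add_distrib, Finset.sum_const,
    Finset.Nat.card_antidiagonal] at hsum
  exact eq_neg_of_add_eq_zero_left hsum

theorem trace_word_mul_Mmat_mem (l : List Bool) :
    trace (word (Amat n) (Bmat n) l * Mmat n) ∈ traceFil n (l.length + 1) 0 := by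
  induction hL : l.length using Nat.strong_induction_on generalizing l with
  | _ L ih =>
  have hperm {l' : List Bool} (h : l.Perm l') :
      trace (word (Amat n) (Bmat n) l' * Mmat n) ≡
        trace (word (Amat n) (Bmat n) l * Mmat n) [SMOD traceFil n (L + 1) 0] := by
    refine (trace_word_mul_sModEq_of_perm h _ fun u v huv => ?_).symm
    have hlen : (u ++ v).length + 2 = L := by rw [List.length_append, huv, hL]
    have := trace_word_mul_lie_mul_word_mul_Mmat_mem (ih _ (by omega) u rfl) (ih _ (by omega) v rfl)
      (ih _ (by omega) (u ++ v) rfl)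
    rwa [show u.length + v.length + 3 = L + 1 by omega] at this
  set p := l.count true
  set q := l.count false
  have hpq : p + q = L := by rw [← hL]; exact l.count_true_add_count_false
  have hterm : ∀ ij ∈ antidiagonal q,
      trace (Bmat n ^ ij.2 * (Amat n ^ p * Bmat n ^ ij.1) * Mmat n) ≡
        trace (word (Amat n) (Bmat n) l * Mmat n) [SMOD traceFil n (L + 1) 0] := fun ij hij => by
    rw [← word_replicate_false (Amat n), ← word_replicate_true _ (Bmat n),
      ← word_replicate_false (Amat n), ← word_append, ← word_append]
    refine hperm (List.perm_iff_count.mpr ?_)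
    rintro (_ | _)
    · simp [List.count_replicate, add_comm ij.2, mem_antidiagonal.mp hij, q]
    · simp [List.count_replicate, p]
  have hsum := SModEq.sum hterm
  rw [sum_trace_Bmat_pow_mul_Mmat, Finset.sum_const, Finset.Nat.card_antidiagonal] at hsum
  refine (Submodule.smul_mem_iff _ (Nat.cast_ne_zero.mpr q.succ_ne_zero : (↑(q + 1) : ℂ) ≠ 0)).mp ?_
  rw [Nat.cast_smul_eq_nsmul, ← SModEq.zero]
  refine hsum.symm.trans (SModEq.zero.mpr (neg_mem (nsmul_mem (Submodule.smul_mem _ _ ?_) _)))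
  exact traceFil_mono (by omega) (trAB_mem_traceFil n p q)

theorem trace_word_sModEq_trAB (l : List Bool) :
    trace (word (Amat n) (Bmat n) l) ≡
      trAB n (l.count true) (l.count false) [SMOD traceFil n l.length 0] := by
  induction hL : l.length using Nat.strong_induction_on generalizing l with
  | _ L ih =>
  rw [trAB, ← word_count, ← mul_one (word _ _ l), ← mul_one (word _ _ (_ ++ _))]
  refine trace_word_mul_sModEq_of_perm (perm_replicate_append_replicate l) 1 fun u v huv => ?_
  have hlen : (v ++ u).length + 2 = L := by rw [List.length_append, ← hL]; omega
  rw [mul_one, trace_mul_comm, ← mul_assoc, ← word_append, trace_mul_lie_Amat_Bmat]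
  refine add_mem (traceFil_mono (by omega) (trace_word_mul_Mmat_mem (v ++ u)))
    (Submodule.smul_mem _ _ ?_)
  have hword := (ih _ (by omega) (v ++ u) rfl).mono (traceFil_mono (d' := L) (m' := 0) (by omega))
  rw [← sub_add_cancel (trace _) (trAB n _ _)]
  refine add_mem (SModEq.sub_mem.mp hword) (traceFil_mono ?_ (trAB_mem_traceFil n _ _))
  have := (v ++ u).count_true_add_count_false
  omega

end Reordering

section BracketFormulas

open Finset.HasAntidiagonal (antidiagonal mem_antidiagonal)

variable {n : ℕ}

theorem trace_Amat : trace (Amat n) = 0 := by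
  rw [Amat_eq_traceless, trace_traceless]

theorem trace_Bmat : trace (Bmat n) = 0 := by
  rw [Bmat_eq_traceless, trace_traceless]

theorem trace_pow_mul_pow_mul_pow_mul_pow_sModEq (a b c d : ℕ) :
    trace (Amat n ^ a * Bmat n ^ b * (Amat n ^ c * Bmat n ^ d)) ≡
      trAB n (a + c) (b + d) [SMOD traceFil n (a + b + c + d) 0] := by
  set l : List Bool :=
    .replicate a true ++ .replicate b false ++ (.replicate c true ++ .replicate d false) with hl
  have hword : word (Amat n) (Bmat n) l = Amat n ^ a * Bmat n ^ b * (Amat n ^ c * Bmat n ^ d) := by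
    simp only [hl, word_append, word_replicate_true, word_replicate_false]
  have htrue : l.count true = a + c := by simp [hl, List.count_replicate]
  have hfalse : l.count false = b + d := by simp [hl, List.count_replicate]
  have hlength : l.length = a + b + c + d := by simp [hl, add_assoc]
  rw [← hword, ← htrue, ← hfalse, ← hlength]
  exact trace_word_sModEq_trAB l

theorem sum_trace_mul_Amat_pow_mul_sModEq (k p q : ℕ) :
    ∑ ij ∈ antidiagonal q, trace (Amat n ^ p * Bmat n ^ ij.1 * (Amat n ^ k * Bmat n ^ ij.2)) ≡
      (q + 1) • trAB n (p + k) q [SMOD traceFil n (p + q + k) 0] := by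
  rw [← Finset.Nat.card_antidiagonal q, ← Finset.sum_const]
  refine SModEq.sum fun ij hij => ?_
  have h := trace_pow_mul_pow_mul_pow_mul_pow_sModEq (n := n) p ij.1 k ij.2
  rwa [show p + ij.1 + k + ij.2 = p + (ij.1 + ij.2) + k by ring, mem_antidiagonal.mp hij] at h

theorem sum_trace_mul_Bmat_pow_mul_sModEq (k p q : ℕ) :
    ∑ ij ∈ antidiagonal p, trace (Bmat n ^ q * Amat n ^ ij.1 * (Bmat n ^ k * Amat n ^ ij.2)) ≡
      (p + 1) • trAB n p (q + k) [SMOD traceFil n (p + q + k) 0] := by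
  rw [← Finset.Nat.card_antidiagonal p, ← Finset.sum_const]
  refine SModEq.sum fun ij hij => ?_
  have h := trace_pow_mul_pow_mul_pow_mul_pow_sModEq (n := n) ij.1 k ij.2 q
  rw [show ij.1 + k + ij.2 + q = ij.1 + ij.2 + q + k by ring, mem_antidiagonal.mp hij,
    add_comm k] at h
  rwa [mul_assoc, trace_mul_comm, mul_assoc, mul_assoc, ← mul_assoc (Amat n ^ _)]

theorem map_ham_trAB_zero_right_Amat (k : ℕ) :
    (Amat n).map (ham (trAB n (k + 1) 0)) = 0 := by
  rw [map_ham_Amat, trAB_zero_right, gradY_trace_Amat_pow_succ, map_zero, neg_zero]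

theorem map_ham_trAB_zero_right_Bmat (k : ℕ) :
    (Bmat n).map (ham (trAB n (k + 1) 0)) = traceless ℂ ((k + 1) • Amat n ^ k) := by
  rw [map_ham_Bmat, trAB_zero_right, gradX_trace_Amat_pow_succ, traceless_traceless]

theorem map_ham_trAB_zero_left_Amat (k : ℕ) :
    (Amat n).map (ham (trAB n 0 (k + 1))) = traceless ℂ (-((k + 1) • Bmat n ^ k)) := by
  rw [map_ham_Amat, trAB_zero_left, gradY_trace_Bmat_pow_succ, traceless_traceless, map_neg]

theorem map_ham_trAB_zero_left_Bmat (k : ℕ) :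
    (Bmat n).map (ham (trAB n 0 (k + 1))) = 0 := by
  rw [map_ham_Bmat, trAB_zero_left, gradX_trace_Bmat_pow_succ, map_zero]

theorem pbracket_trAB_zero_right_trAB_zero_right (k p : ℕ) :
    pbracket (trAB n (k + 1) 0) (trAB n p 0) = 0 := by
  rw [trAB_zero_right p, ← ham_apply, derivation_trace,
    map_derivation_pow_eq_zero _ (map_ham_trAB_zero_right_Amat k), trace_zero]

theorem pbracket_trAB_zero_right_trAB_succ (k p q : ℕ) :
    pbracket (trAB n (k + 1) 0) (trAB n p (q + 1)) ≡
      ((k + 1) * (q + 1)) • (trAB n (p + k) q - (n : ℂ)⁻¹ • (trAB n k 0 * trAB n p q))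
      [SMOD traceFil n (p + q + k) 0] := by
  have h : pbracket (trAB n (k + 1) 0) (trAB n p (q + 1)) =
      (k + 1) • (∑ ij ∈ antidiagonal q,
          trace (Amat n ^ p * Bmat n ^ ij.1 * (Amat n ^ k * Bmat n ^ ij.2))
        - (q + 1) • (n : ℂ)⁻¹ • (trAB n k 0 * trAB n p q)) := by
    rw [← ham_apply, trAB.eq_def n p, derivation_trace_mul_pow_succ
      (map_derivation_pow_eq_zero _ (map_ham_trAB_zero_right_Amat k) p)
      (map_ham_trAB_zero_right_Bmat k)]
    simp only [smul_mul_assoc, Matrix.mul_smul, trace_smul, ← Finset.smul_sum, Fintype.card_fin,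
      mul_assoc, ← Algebra.smul_def, trAB_zero_right, trAB.eq_def n p]
    module
  rw [h]
  convert ((sum_trace_mul_Amat_pow_mul_sModEq k p q).sub .rfl).nsmul (k + 1) using 1
  module

theorem pbracket_trAB_zero_left_trAB_succ (k p q : ℕ) :
    pbracket (trAB n 0 (k + 1)) (trAB n (p + 1) q) ≡
      -(((k + 1) * (p + 1)) • (trAB n p (q + k) - (n : ℂ)⁻¹ • (trAB n 0 k * trAB n p q)))
      [SMOD traceFil n (p + q + k) 0] := by
  have h : pbracket (trAB n 0 (k + 1)) (trAB n (p + 1) q) =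
      -((k + 1) • (∑ ij ∈ antidiagonal p,
          trace (Bmat n ^ q * Amat n ^ ij.1 * (Bmat n ^ k * Amat n ^ ij.2))
        - (p + 1) • (n : ℂ)⁻¹ • (trAB n 0 k * trAB n p q))) := by
    rw [← ham_apply, trAB.eq_def n (p + 1), trace_mul_comm, derivation_trace_mul_pow_succ
      (map_derivation_pow_eq_zero _ (map_ham_trAB_zero_left_Bmat k) q)
      (map_ham_trAB_zero_left_Amat k), trace_mul_comm (Bmat n ^ q)]
    simp only [smul_mul_assoc, Matrix.mul_smul, trace_smul, ← Finset.smul_sum, Fintype.card_fin,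
      mul_assoc, ← Algebra.smul_def, trAB_zero_left, trAB.eq_def n p, neg_mul, mul_neg, trace_neg,
      Finset.sum_neg_distrib, smul_neg]
    module
  rw [h]
  convert (((sum_trace_mul_Bmat_pow_mul_sModEq k p q).sub .rfl).nsmul (k + 1)).neg using 1
  module

theorem pbracket_trAB_one_one_trAB_zero_right (k : ℕ) :
    pbracket (trAB n 1 1) (trAB n (k + 1) 0) = -((k + 1) • trAB n (k + 1) 0) := by
  rw [trAB_zero_right, ← ham_apply, derivation_trace_pow_succ, trAB_one_one, map_ham_Amat,
    gradY_trace_Amat_mul_Bmat, traceless_Amat, mul_neg, ← pow_succ, trace_neg, smul_neg]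

theorem pbracket_trAB_zero_two_trAB_succ (p q : ℕ) :
    pbracket (trAB n 0 2) (trAB n (p + 1) q) ≡
      -((2 * (p + 1)) • trAB n p (q + 1)) [SMOD traceFil n (p + q + 1) 0] := by
  simpa [trAB_zero_left, trace_Bmat] using pbracket_trAB_zero_left_trAB_succ (n := n) 1 p q

theorem pbracket_trAB_zero_two_trAB_zero_left (q : ℕ) :
    pbracket (trAB n 0 2) (trAB n 0 q) = 0 := by
  rw [trAB_zero_left q, ← ham_apply, derivation_trace,
    map_derivation_pow_eq_zero _ (map_ham_trAB_zero_left_Bmat 1), trace_zero]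

theorem pbracket_trAB_zero_two_trAB_mem (p q : ℕ) :
    pbracket (trAB n 0 2) (trAB n p q) ∈ traceFil n (p + q) 1 := by
  cases p with
  | zero =>
    rw [pbracket_trAB_zero_two_trAB_zero_left]
    exact zero_mem _
  | succ p =>
    have hlow := traceFil_mono (d' := p + 1 + q) (m' := 1) (by omega)
      (SModEq.sub_mem.mp (pbracket_trAB_zero_two_trAB_succ (n := n) p q))
    have htop := neg_mem (nsmul_mem (trAB_mem_traceFil n p (q + 1)) (2 * (p + 1)))
    rw [show p + (q + 1) = p + 1 + q by ring] at htop
    simpa using add_mem hlow htop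

theorem pbracket_trAB_zero_two_traceProd_mem (l : List (ℕ × ℕ)) :
    pbracket (trAB n 0 2) (traceProd n l) ∈ traceFil n (traceDeg l) l.length := by
  induction l with
  | nil =>
    rw [traceProd_nil, ← ham_apply, Derivation.map_one_eq_zero]
    exact zero_mem _
  | cons x l ih =>
    obtain ⟨p, q⟩ := x
    have hhead := mul_mem_traceFil (traceProd_mem_traceFil_length l)
      (pbracket_trAB_zero_two_trAB_mem (n := n) p q)
    have htail := mul_mem_traceFil (trAB_mem_traceFil n p q) ih
    rw [add_comm (traceDeg l)] at hhead
    rw [add_comm 1] at htail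
    rw [traceProd_cons, pbracket_mul_right, traceDeg_cons, List.length_cons]
    exact add_mem htail hhead

/-- The image of a product of traces under the derivation which maps `tr A^p B^q` to
`q tr A^p B^(q-1)`, the derivative of `tr A^p B^q` along `B ↦ B + t • 1`. -/
noncomputable def derivB (n : ℕ) : List (ℕ × ℕ) → PolyFun n
  | [] => 0
  | (p, q) :: l => q • (trAB n p (q - 1) * traceProd n l) + trAB n p q * derivB n l

theorem mul_derivB_mem {S : Submodule ℂ (PolyFun n)} (G : PolyFun n) {l : List (ℕ × ℕ)}
    (hS : ∀ l' : List (ℕ × ℕ), l'.length = l.length → traceDeg l' + 1 = traceDeg l →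
      G * traceProd n l' ∈ S) : G * derivB n l ∈ S := by
  induction l generalizing G with
  | nil => simp [derivB]
  | cons x l ih =>
    obtain ⟨p, q⟩ := x
    rw [derivB, mul_add, mul_smul_comm, ← mul_assoc G (trAB n p q)]
    refine add_mem ?_ (ih _ fun l' hlen hdeg => ?_)
    · rcases q with _ | q
      · simp
      · rw [← traceProd_cons]
        exact nsmul_mem (hS ((p, q) :: l) rfl (by rw [traceDeg_cons, traceDeg_cons]; omega)) _
    · rw [mul_assoc, ← traceProd_cons]
      exact hS ((p, q) :: l') (by rw [List.length_cons, List.length_cons, hlen])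
        (by rw [traceDeg_cons, traceDeg_cons]; omega)

theorem pbracket_trAB_zero_right_trAB (k p q : ℕ) :
    pbracket (trAB n (k + 2) 0) (trAB n p q) ≡
      -(((k + 2) * (n : ℂ)⁻¹) • (trAB n (k + 1) 0 * q • trAB n p (q - 1)))
      [SMOD traceFil n (p + q + k) 1] := by
  cases q with
  | zero => simp [pbracket_trAB_zero_right_trAB_zero_right, SModEq.refl]
  | succ q =>
    have h := (pbracket_trAB_zero_right_trAB_succ (n := n) (k + 1) p q).mono
      (traceFil_mono (d' := p + (q + 1) + k) (m' := 1) (by omega))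
    refine h.trans (SModEq.sub_mem.mpr ?_)
    convert nsmul_mem (trAB_mem_traceFil n (p + (k + 1)) q) ((k + 2) * (q + 1)) using 1
    · rw [show p + (k + 1) + q = p + (q + 1) + k by ring]
    · rw [Nat.add_sub_cancel, mul_smul_comm]
      module

theorem pbracket_trAB_zero_right_traceProd (k : ℕ) (l : List (ℕ × ℕ)) :
    pbracket (trAB n (k + 2) 0) (traceProd n l) ≡
      -(((k + 2) * (n : ℂ)⁻¹) • (trAB n (k + 1) 0 * derivB n l))
      [SMOD traceFil n (traceDeg l + k) l.length] := by
  induction l with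
  | nil =>
    rw [traceProd_nil, ← ham_apply, Derivation.map_one_eq_zero, derivB, mul_zero, smul_zero,
      neg_zero]
  | cons x l ih =>
    obtain ⟨p, q⟩ := x
    have hhead := mul_mem_traceFil (traceProd_mem_traceFil_length l)
      (SModEq.sub_mem.mp (pbracket_trAB_zero_right_trAB (n := n) k p q))
    have htail := mul_mem_traceFil (trAB_mem_traceFil n p q) (SModEq.sub_mem.mp ih)
    rw [show traceDeg l + (p + q + k) = p + q + traceDeg l + k by ring] at hhead
    rw [show p + q + (traceDeg l + k) = p + q + traceDeg l + k by ring, add_comm 1] at htail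
    rw [traceProd_cons, pbracket_mul_right, traceDeg_cons, List.length_cons, SModEq.sub_mem]
    convert add_mem hhead htail using 1
    simp only [derivB, Algebra.smul_def]
    ring

end BracketFormulas

section Generation

variable {n : ℕ}

/-- The polynomial functions which agree with an element of `Lie(ℱ)` up to an additive constant and
modulo the minors of `[A, B] - i`; the latter is an algebraic substitute for agreement on `Ŝ_n`. -/
noncomputable def lieMod (n : ℕ) : Submodule ℂ (PolyFun n) where
  carrier := {F | ∃ g c, LieGen n (calF n) g ∧ F - (g + C c) ∈ minorIdeal (Mmat n)}
  zero_mem' := ⟨0, 0, .zero, by simp⟩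
  add_mem' := by
    rintro F G ⟨f, c, hf, hF⟩ ⟨g, d, hg, hG⟩
    refine ⟨f + g, c + d, hf.add hg, ?_⟩
    convert add_mem hF hG using 1
    rw [C_add]
    ring
  smul_mem' := by
    rintro a F ⟨f, c, hf, hF⟩
    refine ⟨a • f, a * c, hf.smul a, ?_⟩
    convert Ideal.mul_mem_left _ (C a) hF using 1
    rw [C_mul, ← C_mul', ← C_mul']
    ring

theorem mem_lieMod_of_lieGen {g : PolyFun n} (hg : LieGen n (calF n) g) : g ∈ lieMod n :=
  ⟨g, 0, hg, by simp⟩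

theorem one_mem_lieMod : 1 ∈ lieMod n := ⟨0, 1, .zero, by simp⟩

theorem minorIdeal_le_lieMod : (minorIdeal (Mmat n)).restrictScalars ℂ ≤ lieMod n :=
  fun F hF => ⟨0, 0, .zero, by simpa using hF⟩

theorem pbracket_mem_lieMod {h F : PolyFun n} (hinv : h ∈ momentInvariants n)
    (hh : h ∈ lieMod n) (hF : F ∈ lieMod n) : pbracket h F ∈ lieMod n := by
  obtain ⟨g, c, hg, hgc⟩ := hh
  obtain ⟨f, d, hf, hfd⟩ := hF
  refine ⟨pbracket g f, 0, hg.bracket hf, ?_⟩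
  have hF := pbracket_mem_minorIdeal hinv hfd
  have hh := pbracket_mem_minorIdeal (mem_momentInvariants_of_lieGen hf) hgc
  simp only [← ham_apply, map_sub, map_add, derivation_C, add_zero] at hF hh
  simp only [ham_apply, pbracket_antisymm f] at hF hh
  convert sub_mem hF hh using 1
  rw [C_0]
  ring

theorem trAB_two_zero_mem_lieMod : trAB n 2 0 ∈ lieMod n :=
  mem_lieMod_of_lieGen (.base (by simp [calF]))

theorem trAB_zero_two_mem_lieMod : trAB n 0 2 ∈ lieMod n :=
  mem_lieMod_of_lieGen (.base (by simp [calF]))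

theorem trAB_three_zero_mem_lieMod : trAB n 3 0 ∈ lieMod n :=
  mem_lieMod_of_lieGen (.base (by simp [calF]))

theorem trAB_one_one_sq_mem_lieMod : trAB n 1 1 ^ 2 ∈ lieMod n :=
  mem_lieMod_of_lieGen (.base (by simp [calF]))

theorem trAB_zero_right_mem_momentInvariants (k : ℕ) :
    trAB n (k + 1) 0 ∈ momentInvariants n :=
  trAB_zero_right (n := n) (k + 1) ▸ trace_Amat_pow_mem_momentInvariants k

theorem trAB_zero_left_mem_momentInvariants (k : ℕ) :
    trAB n 0 (k + 1) ∈ momentInvariants n :=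
  trAB_zero_left (n := n) (k + 1) ▸ trace_Bmat_pow_mem_momentInvariants k

theorem trAB_one_one_mem_momentInvariants : trAB n 1 1 ∈ momentInvariants n :=
  trAB_one_one (n := n) ▸ trace_Amat_mul_Bmat_mem_momentInvariants

theorem mem_of_nsmul_mem {S : Submodule ℂ (PolyFun n)} {k : ℕ} (hk : k ≠ 0) {F : PolyFun n}
    (h : k • F ∈ S) : F ∈ S :=
  (S.smul_mem_iff (Nat.cast_ne_zero.mpr hk)).mp (Nat.cast_smul_eq_nsmul ℂ k F ▸ h)

theorem trAB_one_one_mul_trAB_two_zero_mem_lieMod : trAB n 1 1 * trAB n 2 0 ∈ lieMod n := by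
  have h := pbracket_mem_lieMod (n := n) (pow_mem trAB_one_one_mem_momentInvariants 2)
    trAB_one_one_sq_mem_lieMod trAB_two_zero_mem_lieMod
  rw [pbracket_antisymm, sq, pbracket_mul_right, pbracket_antisymm _ (trAB n 1 1),
    pbracket_trAB_one_one_trAB_zero_right 1] at h
  refine mem_of_nsmul_mem (k := 4) (by omega) ?_
  convert neg_mem h using 1
  simp only [neg_neg, mul_smul_comm]
  module

theorem trAB_two_zero_mul_trAB_zero_right_mem_lieMod {k : ℕ} (h : trAB n (k + 1) 0 ∈ lieMod n) :
    trAB n 2 0 * trAB n (k + 1) 0 ∈ lieMod n := by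
  have hbr := pbracket_mem_lieMod (mul_mem trAB_one_one_mem_momentInvariants
    (trAB_zero_right_mem_momentInvariants 1)) trAB_one_one_mul_trAB_two_zero_mem_lieMod h
  rw [pbracket_antisymm, pbracket_mul_right, pbracket_antisymm _ (trAB n 1 1),
    pbracket_trAB_zero_right_trAB_zero_right, pbracket_trAB_one_one_trAB_zero_right] at hbr
  refine mem_of_nsmul_mem k.succ_ne_zero ?_
  convert neg_mem hbr using 1
  simp only [neg_neg, mul_smul_comm, mul_zero, zero_add]

-- `{tr A³, tr A^(e+2) B}` produces `tr A^(e+4)`, with `tr A² tr A^(e+2)` as correction term.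
theorem trAB_zero_right_mem_lieMod {d : ℕ} (hlow : traceFil n (d + 2) 0 ≤ lieMod n) :
    trAB n (d + 2) 0 ∈ lieMod n := by
  rcases d with _ | _ | e
  · exact trAB_two_zero_mem_lieMod
  · exact trAB_three_zero_mem_lieMod
  have hmem {p q : ℕ} (h : p + q < e + 4) : trAB n p q ∈ lieMod n :=
    hlow (traceFil_mono (.inl h) (trAB_mem_traceFil n p q))
  have hcorr := trAB_two_zero_mul_trAB_zero_right_mem_lieMod
    (hmem (p := e + 2) (q := 0) (by omega))
  have hbr := pbracket_mem_lieMod (trAB_zero_right_mem_momentInvariants 2)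
    trAB_three_zero_mem_lieMod (hmem (p := e + 2) (q := 1) (by omega))
  have htop := (Submodule.sub_mem_iff_right _ hbr).mp
    (hlow (SModEq.sub_mem.mp (pbracket_trAB_zero_right_trAB_succ 2 (e + 2) 0)))
  exact ((lieMod n).sub_mem_iff_left ((lieMod n).smul_mem _ hcorr)).mp
    (mem_of_nsmul_mem (by omega) htop)

theorem trAB_mem_traceFil_zero {p q : ℕ} (h : p + q < 2) :
    trAB n p q ∈ traceFil n (p + q) 0 := by
  obtain ⟨rfl, rfl⟩ | ⟨rfl, rfl⟩ | ⟨rfl, rfl⟩ :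
      p = 0 ∧ q = 0 ∨ p = 1 ∧ q = 0 ∨ p = 0 ∧ q = 1 := by omega
  · have h1 : (1 : PolyFun n) ∈ traceFil n 0 0 := traceProd_mem_traceFil_length (n := n) []
    simpa [trAB] using nsmul_mem h1 n
  · simp [trAB_zero_right, trace_Amat]
  · simp [trAB_zero_left, trace_Bmat]

-- The bracket of `tr A^(a+3)` with `tr A^r B^(s+1)` times the product of `l` produces, modulo
-- `hlow`, this product and others in which `l` is replaced by a list of smaller degree.
theorem trAB_zero_right_mul_trAB_mul_traceProd_mem_lieMod (hn : n ≠ 0) {d m a r s : ℕ}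
    {l : List (ℕ × ℕ)} (hlow : traceFil n d m ≤ lieMod n) (hrs : 2 ≤ r + s)
    (hdeg : a + 2 + (r + s) + traceDeg l = d) (hlen : l.length + 1 = m) :
    trAB n (a + 2) 0 * (trAB n r s * traceProd n l) ∈ lieMod n := by
  induction hN : traceDeg l using Nat.strong_induction_on generalizing s l with
  | _ N ih =>
  have hbr := pbracket_mem_lieMod (trAB_zero_right_mem_momentInvariants (a + 2))
    (hlow (traceFil_mono (.inl (by omega)) (trAB_mem_traceFil n (a + 3) 0)))
    (hlow (traceProd_mem_traceFil (l := (r, s + 1) :: l) (.inl (by rw [traceDeg_cons]; omega))))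
  have hderiv : trAB n (a + 2) 0 * derivB n ((r, s + 1) :: l) ∈ lieMod n := by
    have h := SModEq.sub_mem.mp
      (pbracket_trAB_zero_right_traceProd (n := n) (a + 1) ((r, s + 1) :: l))
    rw [traceDeg_cons, List.length_cons, hlen,
      show r + (s + 1) + traceDeg l + (a + 1) = d by omega] at h
    have h' := neg_mem_iff.mp (((lieMod n).sub_mem_iff_right hbr).mp (hlow h))
    refine ((lieMod n).smul_mem_iff (mul_ne_zero ?_ ?_)).mp h'
    · norm_cast
    · exact inv_ne_zero (Nat.cast_ne_zero.mpr hn)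
  have htail : trAB n (a + 2) 0 * trAB n r (s + 1) * derivB n l ∈ lieMod n :=
    mul_derivB_mem _ fun l' hlen' hdeg' => by
      rw [mul_assoc]
      exact ih (traceDeg l') (by omega) (by omega) (by omega) (by omega) rfl
  rw [derivB, mul_add, ← mul_assoc, Submodule.add_mem_iff_left _ htail, mul_smul_comm] at hderiv
  exact mem_of_nsmul_mem s.succ_ne_zero hderiv

theorem trAB_zero_right_mul_traceProd_mem_lieMod (hn : n ≠ 0) {d m a : ℕ} {l : List (ℕ × ℕ)}
    (hlow : traceFil n d m ≤ lieMod n) (hdeg : a + 2 + traceDeg l = d) (hlen : l.length = m) :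
    trAB n (a + 2) 0 * traceProd n l ∈ lieMod n := by
  subst hdeg hlen
  rcases l with _ | ⟨⟨r, s⟩, l⟩
  · rw [traceProd_nil, mul_one]
    exact trAB_zero_right_mem_lieMod hlow
  rw [traceDeg_cons, List.length_cons] at hlow
  rw [traceProd_cons]
  rcases Nat.lt_or_ge (r + s) 2 with hrs | hrs
  · refine hlow (traceFil_mono (.inr ⟨by ring, by ring_nf; rfl⟩) <|
      mul_mem_traceFil (trAB_mem_traceFil n (a + 2) 0) <|
        mul_mem_traceFil (trAB_mem_traceFil_zero hrs) (traceProd_mem_traceFil_length l))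
  · exact trAB_zero_right_mul_trAB_mul_traceProd_mem_lieMod hn hlow hrs (by ring) rfl

theorem trAB_mul_mem_of_mem_traceFil {S : Submodule ℂ (PolyFun n)} {p q d m : ℕ}
    (hlow : traceFil n (p + q + d) m ≤ S)
    (htop : ∀ l, traceDeg l = d → l.length = m → trAB n p q * traceProd n l ∈ S)
    {F : PolyFun n} (hF : F ∈ traceFil n d m) : trAB n p q * F ∈ S := by
  refine traceFil_le (S := S.comap (LinearMap.mulLeft ℂ (trAB n p q))) (fun l hl => ?_)
    (fun G hG => ?_) hF
  · rw [Submodule.mem_comap, LinearMap.mulLeft_apply]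
    by_cases hm : traceDeg l = d ∧ l.length = m
    · exact htop l hm.1 hm.2
    · refine hlow ?_
      rw [← traceProd_cons]
      refine traceProd_mem_traceFil ?_
      rw [traceDeg_cons, List.length_cons]
      omega
  · exact hlow (minorIdeal_le_traceFil n _ _ (Ideal.mul_mem_left _ _ hG))

-- `{tr B², ·}` lowers the power of `A` and raises the power of `B`.
theorem trAB_mul_traceProd_mem_lieMod (hn : n ≠ 0) {d m p q : ℕ} {l : List (ℕ × ℕ)}
    (hlow : traceFil n d m ≤ lieMod n) (hpq : 2 ≤ p + q) (hdeg : p + q + traceDeg l = d)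
    (hlen : l.length = m) : trAB n p q * traceProd n l ∈ lieMod n := by
  induction q generalizing p l with
  | zero =>
    obtain ⟨a, rfl⟩ := Nat.exists_eq_add_of_le' hpq
    exact trAB_zero_right_mul_traceProd_mem_lieMod hn hlow hdeg hlen
  | succ q ih =>
    have hbr := pbracket_mem_lieMod (trAB_zero_left_mem_momentInvariants 1)
      trAB_zero_two_mem_lieMod (ih (p := p + 1) (l := l) (by omega) (by omega) hlen)
    have htail : trAB n (p + 1) q * pbracket (trAB n 0 2) (traceProd n l) ∈ lieMod n := by
      refine trAB_mul_mem_of_mem_traceFil (hlow.trans' (traceFil_mono (by omega)))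
        (fun l' hdeg' hlen' => ih (by omega) (by omega) (by omega))
        (pbracket_trAB_zero_two_traceProd_mem l)
    rw [pbracket_mul_right, Submodule.add_mem_iff_right _ htail] at hbr
    have hhead := mul_mem_traceFil (traceProd_mem_traceFil_length l)
      (SModEq.sub_mem.mp (pbracket_trAB_zero_two_trAB_succ (n := n) p q))
    have h := hlow (traceFil_mono (by omega) hhead)
    rw [mul_sub, Submodule.sub_mem_iff_right _ hbr, mul_neg, neg_mem_iff, mul_smul_comm,
      mul_comm (traceProd n l)] at h
    exact mem_of_nsmul_mem (by omega) h

theorem traceFil_le_lieMod (hn : n ≠ 0) (d m : ℕ) : traceFil n d m ≤ lieMod n := by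
  induction d using Nat.strong_induction_on generalizing m with
  | _ d ihd =>
  have hlt {l} (hl : traceDeg l < d) : traceProd n l ∈ lieMod n :=
    ihd _ hl _ (traceProd_mem_traceFil_length l)
  induction m with
  | zero =>
    refine traceFil_le (fun l hl => hl.elim hlt fun ⟨_, hlen⟩ => ?_) minorIdeal_le_lieMod
    rw [List.length_eq_zero_iff.mp (Nat.le_zero.mp hlen), traceProd_nil]
    exact one_mem_lieMod
  | succ m hlow =>
    refine traceFil_le (fun l hl => hl.elim hlt fun ⟨hdeg, hlen⟩ => ?_) minorIdeal_le_lieMod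
    rcases hlen.lt_or_eq with hlen | hlen
    · exact hlow (traceProd_mem_traceFil (.inr ⟨hdeg, by omega⟩))
    obtain ⟨⟨p, q⟩, l, rfl⟩ := List.exists_cons_of_length_eq_add_one hlen
    rw [traceDeg_cons] at hdeg
    rw [List.length_cons, Nat.add_right_cancel_iff] at hlen
    rw [traceProd_cons]
    rcases Nat.lt_or_ge (p + q) 2 with hpq | hpq
    · exact hlow (traceFil_mono (by omega)
        (mul_mem_traceFil (trAB_mem_traceFil_zero hpq) (traceProd_mem_traceFil_length l)))
    · exact trAB_mul_traceProd_mem_lieMod hn hlow hpq hdeg hlen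

theorem traceProd_mem_lieMod (hn : n ≠ 0) (l : List (ℕ × ℕ)) : traceProd n l ∈ lieMod n :=
  traceFil_le_lieMod hn _ _ (traceProd_mem_traceFil_length l)

theorem traceProd_toList {ι : Type*} (s : Finset ι) (p q : ι → ℕ) :
    traceProd n (s.toList.map fun k => (p k, q k)) = ∏ k ∈ s, trAB n (p k) (q k) := by
  rw [traceProd, List.map_map, ← Finset.prod_map_toList]
  rfl

end Generation

theorem stmt_11_general (n : ℕ) (hn : n ≠ 0)
    (hconst : ∃ g : PolyFun n, LieGen n (calF n) g ∧
      ∀ P ∈ Shat n, evalP P.1 P.2 (trAB n 0 0) = evalP P.1 P.2 g)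
    {ι : Type*} (s : Finset ι) (p q : ι → ℕ) :
    ∃ g : PolyFun n, LieGen n (calF n) g ∧
      ∀ P ∈ Shat n, evalP P.1 P.2 (∏ k ∈ s, trAB n (p k) (q k)) = evalP P.1 P.2 g := by
  obtain ⟨g₀, hg₀, hconst⟩ := hconst
  obtain ⟨g, c, hg, hgc⟩ := traceProd_mem_lieMod hn (s.toList.map fun k => (p k, q k))
  refine ⟨g + (c * (n : ℂ)⁻¹) • g₀, hg.add (hg₀.smul _), fun P hP => ?_⟩
  have hprod := evalP_eq_zero_of_mem_minorIdeal hP hgc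
  have hg₀P : (n : ℂ) = evalP P.1 P.2 g₀ := by simpa [trAB, evalP] using hconst P hP
  rw [traceProd_toList] at hprod
  simp only [evalP, map_sub, map_add, eval_C, smul_eval] at hprod hg₀P ⊢
  rw [← hg₀P, inv_mul_cancel_right₀ (Nat.cast_ne_zero.mpr hn)]
  exact sub_eq_zero.mp hprod

/-- induction step `H(D) → H(D+4)`. -/
theorem stmt_11 (n : ℕ) (hn : 1 ≤ n) (D : ℕ)
    (H : ∀ m : ℕ, 1 ≤ m → ∀ p q : ℕ → ℕ,
      (∑ k ∈ Finset.range m, (p k + q k)) ≤ D →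
      ∃ g : PolyFun n, LieGen n (calF n) g ∧
        ∀ P ∈ Shat n,
          evalP P.1 P.2 (∏ k ∈ Finset.range m, trAB n (p k) (q k)) = evalP P.1 P.2 g)
    (m : ℕ) (hm : 1 ≤ m) (p q : ℕ → ℕ)
    (hdeg : (∑ k ∈ Finset.range m, (p k + q k)) ≤ D + 4) :
    ∃ g : PolyFun n, LieGen n (calF n) g ∧
      ∀ P ∈ Shat n,
        evalP P.1 P.2 (∏ k ∈ Finset.range m, trAB n (p k) (q k)) = evalP P.1 P.2 g :=
  stmt_11_general n (by omega) (by simpa using H 1 le_rfl 0 0 (by simp)) (Finset.range m) p q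
end
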